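/- arXiv:1510.05330 — 8 statements merged into one kernel-verified Lean document; each statement's English description precedes it below -/
import Mathlib

section
/- Let n ≥ 1. For every 1 ≤ i ≤ n, the polynomial ∑_{j=i}^{n} a_{ij}(x,y)·(x_j − y_j) lies in the ideal I_n of ℚ[x_1,…,x_n,y_1,…,y_n]. In particular, each such sum acts by zero on the quotient module ℚ[x_1,…,x_n,y_1,…,y_n]/I_n. -/
/-!
For sequences `x, y` in a commutative ring put
`A_s(p, q) = ∑_γ ∏_{k=1}^{p} (y_{γ_k} - x_{γ_k + s + p - k})`, summed over
`1 ≤ γ_1 < ⋯ < γ_p ≤ q` (`excSum` below). Splitting on whether `γ_p = q + 1` gives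
`A_s(p+1, q+1) = A_s(p+1, q) + (y_{q+1} - x_{q+1+s}) A_{s+1}(p, q)` (`excSum_succ_succ`).

Since `a_{ij} = A_1(i-1, j-1)`, this recursion with `s = 0` telescopes to
`∑_{j=i}^n a_{ij} (x_j - y_j) = -A_0(i, n)` (`sum_excSum`). The same recursion yields, by induction
on `q`, the closed form (`excSum_eq_coeff`)
`A_s(p, q) = [z^p] ∏_{j=1}^{q} (1 + y_j z) / ∏_{j=p+s}^{q+s} (1 + x_j z)`.

Modulo `I_n` the elementary symmetric polynomials in `x` and in `y` agree, that is,
`∏_{j=1}^n (1 + y_j z) = ∏_{j=1}^n (1 + x_j z)` (`prod_yv_eq_prod_xv`). Hence modulo `I_n`,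
`A_0(i, n) = [z^i] ∏_{j=1}^{i-1} (1 + x_j z)`, which vanishes for degree reasons
(`excSum_eq_zero`).
-/

/-!
Statement 0. Work in `P = ℚ[x_1,…,x_n,y_1,…,y_n]`, realized as
`MvPolynomial (Fin n ⊕ Fin n) ℚ` with `x`-variables indexed by `Sum.inl` and
`y`-variables indexed by `Sum.inr`.  For `1 ≤ k ≤ n`, `I_k` is the ideal generated by
`e_m(y) − e_m(x)` for `1 ≤ m ≤ k` together with `y_m − x_m` for `k+1 ≤ m ≤ n`.
For `1 ≤ i ≤ j`, `a_{ij} = ∑_γ ∏_{k=1}^{i−1} (y_{γ_k} − x_{γ_k + i − k})` where the sum is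
over strictly increasing sequences `1 ≤ γ_1 < ⋯ < γ_{i−1} ≤ j−1`.

Claim: for `1 ≤ i ≤ n`, `∑_{j=i}^{n} a_{ij}·(x_j − y_j) ∈ I_n`; in particular this sum
acts by zero on `P/I_n`.
-/

open MvPolynomial

noncomputable section

/-- The polynomial ring `P = ℚ[x_1,…,x_n,y_1,…,y_n]`. -/
abbrev PP (n : ℕ) := MvPolynomial (Fin n ⊕ Fin n) ℚ

/-- The variable `x_m` (1-indexed, for `1 ≤ m ≤ n`). -/
def xv (n : ℕ) (m : ℕ) : PP n :=
  if h : 0 < n then X (Sum.inl ⟨(m - 1) % n, Nat.mod_lt _ h⟩) else 0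

/-- The variable `y_m` (1-indexed, for `1 ≤ m ≤ n`). -/
def yv (n : ℕ) (m : ℕ) : PP n :=
  if h : 0 < n then X (Sum.inr ⟨(m - 1) % n, Nat.mod_lt _ h⟩) else 0

/-- `e_m(x_1,…,x_n)` inside `P`. -/
def ex (n m : ℕ) : PP n := rename Sum.inl (esymm (Fin n) ℚ m)

/-- `e_m(y_1,…,y_n)` inside `P`. -/
def ey (n m : ℕ) : PP n := rename Sum.inr (esymm (Fin n) ℚ m)

/-- The ideal `I_k ⊆ P`, generated by `e_m(y) − e_m(x)` for `1 ≤ m ≤ k` together with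
`y_m − x_m` for `k+1 ≤ m ≤ n` (in 0-indexed terms, `y_i - x_i` for indices `i ≥ k`). -/
def Ik (n k : ℕ) : Ideal (PP n) :=
  Ideal.span ((fun m => ey n m - ex n m) '' {m : ℕ | 1 ≤ m ∧ m ≤ k} ∪
    (fun i : Fin n => X (Sum.inr i) - X (Sum.inl i)) '' {i : Fin n | k ≤ (i : ℕ)})

/-- The polynomial `a_{ij}(x,y) = ∑_γ ∏_{k=1}^{i−1} (y_{γ_k} − x_{γ_k + i − k})`, where the sum
runs over strictly increasing sequences `1 ≤ γ_1 < ⋯ < γ_{i−1} ≤ j−1`.  Here a sequence is a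
strictly monotone function `γ : Fin (i-1) → Fin (j-1)`, with the 1-indexed value of `γ_k`
being `(γ k : ℕ) + 1`, and the 1-indexed position of `k : Fin (i-1)` being `(k : ℕ) + 1`. -/
def aij (n i j : ℕ) : PP n :=
  ∑ γ ∈ @Finset.filter _ (fun γ : Fin (i - 1) → Fin (j - 1) => StrictMono γ)
      (Classical.decPred _) Finset.univ,
    ∏ k : Fin (i - 1),
      (yv n ((γ k : ℕ) + 1) - xv n (((γ k : ℕ) + 1) + i - ((k : ℕ) + 1)))

section Aux

variable {R : Type*} [CommRing R]

/-- The sum `A_s(p, q)` of `∏_{k=1}^{p} (y_{γ_k} - x_{γ_k + s + p - k})` over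
`1 ≤ γ_1 < ⋯ < γ_p ≤ q`. A sequence is encoded by a strictly monotone `Fin p → Fin q`; the shifts
by one in `γ_k` and in `k` cancel in the index of `x`, and the natural subtraction there is
exact. -/
def excSum (x y : ℕ → R) (s p q : ℕ) : R :=
  ∑ γ ∈ @Finset.filter _ (fun γ : Fin p → Fin q => StrictMono γ)
      (Classical.decPred _) Finset.univ,
    ∏ k : Fin p, (y ((γ k : ℕ) + 1) - x ((γ k : ℕ) + s + p - (k : ℕ)))

lemma excSum_zero (x y : ℕ → R) (s q : ℕ) : excSum x y s 0 q = 1 := by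
  unfold excSum
  rw [@Finset.filter_true_of_mem _ _ (_) _ fun γ _ a => a.elim0]
  simp

lemma excSum_of_lt (x y : ℕ → R) (s : ℕ) {p q : ℕ} (h : q < p) : excSum x y s p q = 0 := by
  unfold excSum
  refine Finset.sum_eq_zero fun γ hγ => ?_
  have := Fintype.card_le_of_injective γ ((@Finset.mem_filter _ _ (_) _ _).1 hγ).2.injective
  simp only [Fintype.card_fin] at this
  omega

/-- Splitting according to whether the last entry of the sequence is `q + 1`. -/
lemma excSum_succ_succ (x y : ℕ → R) (s p q : ℕ) :
    excSum x y s (p + 1) (q + 1) =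
      excSum x y s (p + 1) q + (y (q + 1) - x (q + 1 + s)) * excSum x y (s + 1) p q := by
  classical
  unfold excSum
  rw [← Finset.sum_filter_add_sum_filter_not _
    (fun γ : Fin (p + 1) → Fin (q + 1) => γ (Fin.last p) ≠ Fin.last q)]
  congr 1
  · symm
    refine Finset.sum_bij (fun γ _ k => (γ k).castSucc) ?_ ?_ ?_ ?_
    · intro γ hγ
      simp only [Finset.mem_filter, Finset.mem_univ, true_and] at hγ ⊢
      exact ⟨fun a b hab => by simpa using hγ hab, (Fin.castSucc_lt_last _).ne⟩
    · intro γ _ δ _ h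
      funext k
      exact Fin.castSucc_injective _ (congrFun h k)
    · intro δ hδ
      simp only [Finset.mem_filter, Finset.mem_univ, true_and] at hδ
      have hne : ∀ k, δ k ≠ Fin.last q := fun k =>
        ((hδ.1.monotone (Fin.le_last k)).trans_lt (Fin.lt_last_iff_ne_last.2 hδ.2)).ne
      refine ⟨fun k => (δ k).castPred (hne k), ?_, ?_⟩
      · simp only [Finset.mem_filter, Finset.mem_univ, true_and]
        intro a b hab
        simpa using hδ.1 hab
      · funext k
        simp
    · intro γ _
      simp
  · rw [Finset.mul_sum]
    symm
    refine Finset.sum_bij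
      (fun γ _ => Fin.snoc (α := fun _ => Fin (q + 1)) (fun k => (γ k).castSucc) (Fin.last q))
      ?_ ?_ ?_ ?_
    · intro γ hγ
      simp only [Finset.mem_filter, Finset.mem_univ, true_and] at hγ ⊢
      refine ⟨?_, by simp⟩
      intro a b hab
      induction a using Fin.lastCases with
      | last => exact absurd hab (Fin.le_last b).not_gt
      | cast a =>
        induction b using Fin.lastCases with
        | last => simp
        | cast b => simpa using hγ (by simpa using hab)
    · intro γ _ δ _ h
      funext k
      have := congrFun h k.castSucc
      simpa using this
    · intro δ hδ
      simp only [Finset.mem_filter, Finset.mem_univ, true_and, not_not] at hδ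
      have hne : ∀ k : Fin p, δ k.castSucc ≠ Fin.last q := fun k => by
        rw [← hδ.2]
        exact (hδ.1 (Fin.castSucc_lt_last k)).ne
      refine ⟨fun k => (δ k.castSucc).castPred (hne k), ?_, ?_⟩
      · simp only [Finset.mem_filter, Finset.mem_univ, true_and]
        intro a b hab
        simpa using hδ.1 (Fin.castSucc_lt_castSucc_iff.2 hab)
      · funext k
        induction k using Fin.lastCases with
        | last => simp [hδ.2]
        | cast k => simp
    · intro γ _
      rw [Fin.prod_univ_castSucc, mul_comm]
      congr 1
      · refine Finset.prod_congr rfl fun k _ => ?_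
        simp only [Fin.snoc_castSucc, Fin.val_castSucc]
        congr 2
        omega
      · simp only [Fin.snoc_last, Fin.val_last]
        congr 2
        omega

/-- The recursion with `s = 0` telescopes: the sum classifies the sequences of length `p + 1` by
their last entry `j`. -/
lemma sum_excSum (x y : ℕ → R) (p q : ℕ) (h : p ≤ q) :
    ∑ j ∈ Finset.Icc (p + 1) q, excSum x y 1 p (j - 1) * (x j - y j) =
      -excSum x y 0 (p + 1) q := by
  induction q, h using Nat.le_induction with
  | base => simp [excSum_of_lt]
  | succ q hq ih =>
    rw [Finset.sum_Icc_succ_top (by omega), ih, excSum_succ_succ]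
    simp only [Nat.add_sub_cancel, add_zero, zero_add]
    ring

/-- The power series `1 / (1 + c z)`. -/
def geom (c : R) : PowerSeries R := PowerSeries.mk fun m => (-c) ^ m

lemma one_add_mul_geom (c : R) :
    (1 + PowerSeries.C c * PowerSeries.X) * geom c = 1 := by
  ext m
  rw [add_mul, one_mul, mul_assoc, map_add, PowerSeries.coeff_C_mul]
  cases m with
  | zero => simp [geom]
  | succ m =>
    rw [PowerSeries.coeff_succ_X_mul]
    simp [geom, PowerSeries.coeff_one]
    ring

/-- A product of `d` linear factors has no coefficient in degree above `d`. -/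
lemma coeff_prod_one_add_of_lt {ι : Type*} (t : Finset ι) (c : ι → R) (m : ℕ) (h : t.card < m) :
    PowerSeries.coeff m (∏ j ∈ t, (1 + PowerSeries.C (c j) * PowerSeries.X)) = 0 := by
  classical
  induction t using Finset.induction_on generalizing m with
  | empty => simp at h; simp [PowerSeries.coeff_one]; omega
  | insert a t ha ih =>
    rw [Finset.card_insert_of_notMem ha] at h
    obtain ⟨m, rfl⟩ : ∃ k, m = k + 1 := ⟨m - 1, by omega⟩
    rw [Finset.prod_insert ha, add_mul, one_mul, mul_assoc, map_add, PowerSeries.coeff_C_mul,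
      PowerSeries.coeff_succ_X_mul, ih _ (by omega), ih _ (by omega)]
    simp

/-- The closed form of `A_s(p, q)` as the coefficient of `z ^ p` in
`∏_{1 ≤ j ≤ q} (1 + y_j z) / ∏_{p + s ≤ j ≤ q + s} (1 + x_j z)`. -/
lemma excSum_eq_coeff (x y : ℕ → R) (s p q : ℕ) :
    excSum x y s p q = PowerSeries.coeff p
      ((∏ j ∈ Finset.Icc 1 q, (1 + PowerSeries.C (y j) * PowerSeries.X)) *
        ∏ j ∈ Finset.Icc (p + s) (q + s), geom (x j)) := by
  induction q generalizing s p with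
  | zero =>
    cases p with
    | zero => simp [excSum_zero, geom]
    | succ p =>
      rw [excSum_of_lt _ _ _ (by omega), Finset.Icc_eq_empty_of_lt (by omega : 0 + s < p + 1 + s)]
      simp [PowerSeries.coeff_one]
  | succ q ih =>
    cases p with
    | zero =>
      rw [excSum_zero, PowerSeries.coeff_zero_eq_constantCoeff_apply]
      simp [map_prod, geom]
    | succ p =>
      by_cases hpq : q < p
      · rw [excSum_of_lt _ _ _ (by omega),
          Finset.Icc_eq_empty_of_lt (by omega : q + 1 + s < p + 1 + s),
          Finset.prod_empty, mul_one, coeff_prod_one_add_of_lt _ _ _ (by simp; omega)]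
      · rw [excSum_succ_succ, ih s (p + 1), ih (s + 1) p, ← PowerSeries.coeff_C_mul,
          ← PowerSeries.coeff_succ_X_mul p, ← map_add,
          Finset.prod_Icc_succ_top (by omega : 1 ≤ q + 1),
          show q + 1 + s = q + s + 1 by omega, show q + (s + 1) = q + s + 1 by omega,
          show p + (s + 1) = p + 1 + s by omega,
          Finset.prod_Icc_succ_top (by omega : p + 1 + s ≤ q + s + 1)]
        congr 1
        have hg := one_add_mul_geom (x (q + s + 1))
        rw [map_sub]
        linear_combination (-(∏ j ∈ Finset.Icc 1 q,
          (1 + PowerSeries.C (y j) * PowerSeries.X)) *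
            ∏ j ∈ Finset.Icc (p + 1 + s) (q + s), geom (x j)) * hg

/-- If `∏ (1 + y_j z) = ∏ (1 + x_j z)`, the quotient by `∏_{j ≥ p} (1 + x_j z)` is a polynomial
of degree below `p`. -/
lemma excSum_eq_zero (x y : ℕ → R) (p n : ℕ) (hp : 1 ≤ p) (hpn : p ≤ n)
    (h : ∏ j ∈ Finset.Icc 1 n, (1 + PowerSeries.C (y j) * PowerSeries.X) =
      ∏ j ∈ Finset.Icc 1 n, (1 + PowerSeries.C (x j) * PowerSeries.X)) :
    excSum x y 0 p n = 0 := by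
  have hd : Finset.Icc 1 n = Finset.Ico 1 p ∪ Finset.Icc p n := by
    ext j
    simp only [Finset.mem_union, Finset.mem_Icc, Finset.mem_Ico]
    omega
  have hdis : Disjoint (Finset.Ico 1 p) (Finset.Icc p n) := by
    rw [Finset.disjoint_left]
    intro j
    simp only [Finset.mem_Icc, Finset.mem_Ico]
    omega
  rw [excSum_eq_coeff, h, hd, Finset.prod_union hdis, mul_assoc, add_zero, add_zero,
    ← Finset.prod_mul_distrib, Finset.prod_congr rfl fun j _ => one_add_mul_geom (x j),
    Finset.prod_const_one, mul_one, coeff_prod_one_add_of_lt _ _ _ (by simp; omega)]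

/-- The generating function of the elementary symmetric polynomials evaluated at `r`. -/
lemma prod_one_add_eq_sum {n : ℕ} (r : Fin n → R) :
    ∏ j, (1 + PowerSeries.C (r j) * PowerSeries.X) =
      ∑ m ∈ Finset.range (n + 1), PowerSeries.C
        (∑ t ∈ Finset.powersetCard m Finset.univ, ∏ j ∈ t, r j) * PowerSeries.X ^ m := by
  rw [Finset.prod_one_add, Finset.sum_powerset]
  simp only [Finset.card_univ, Fintype.card_fin]
  refine Finset.sum_congr rfl fun m _ => ?_
  rw [map_sum, Finset.sum_mul]
  refine Finset.sum_congr rfl fun t ht => ?_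
  rw [Finset.prod_mul_distrib, Finset.prod_const, (Finset.mem_powersetCard.1 ht).2, map_prod]

lemma map_excSum {R' : Type*} [CommRing R'] (f : R →+* R') (x y : ℕ → R) (s p q : ℕ) :
    f (excSum x y s p q) = excSum (fun j => f (x j)) (fun j => f (y j)) s p q := by
  simp [excSum, map_sum, map_prod]

lemma prod_Icc_eq_prod_fin {M : Type*} [CommMonoid M] (n : ℕ) (f : ℕ → M) :
    ∏ j ∈ Finset.Icc 1 n, f j = ∏ j : Fin n, f (j + 1) := by
  rw [Fin.prod_univ_eq_prod_range (fun j => f (j + 1)), Finset.range_eq_Ico,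
    Finset.prod_Ico_add' f 0 n 1]
  rfl

end Aux

lemma xv_succ {n : ℕ} (j : Fin n) : xv n (j + 1) = X (Sum.inl j) := by
  have h : 0 < n := by have := j.2; omega
  simp [xv, h, Nat.mod_eq_of_lt j.2]

lemma yv_succ {n : ℕ} (j : Fin n) : yv n (j + 1) = X (Sum.inr j) := by
  have h : 0 < n := by have := j.2; omega
  simp [yv, h, Nat.mod_eq_of_lt j.2]

/-- Modulo `I_n` the two generating functions of the elementary symmetric polynomials agree. -/
lemma prod_yv_eq_prod_xv (n : ℕ) :
    ∏ j ∈ Finset.Icc 1 n,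
        (1 + PowerSeries.C (Ideal.Quotient.mk (Ik n n) (yv n j)) * PowerSeries.X) =
      ∏ j ∈ Finset.Icc 1 n,
        (1 + PowerSeries.C (Ideal.Quotient.mk (Ik n n) (xv n j)) * PowerSeries.X) := by
  rw [prod_Icc_eq_prod_fin, prod_Icc_eq_prod_fin]
  simp only [xv_succ, yv_succ]
  rw [prod_one_add_eq_sum, prod_one_add_eq_sum]
  refine Finset.sum_congr rfl fun m hm => ?_
  congr 2
  rcases Nat.eq_zero_or_pos m with rfl | hm0
  · simp
  · have h : Ideal.Quotient.mk (Ik n n) (ey n m) = Ideal.Quotient.mk (Ik n n) (ex n m) := by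
      rw [Ideal.Quotient.eq]
      refine Ideal.subset_span (Or.inl ⟨m, ⟨hm0, ?_⟩, rfl⟩)
      have := Finset.mem_range.1 hm
      omega
    simpa [ex, ey, esymm, map_sum, map_prod] using h

lemma aij_eq_excSum (n p j : ℕ) :
    aij n (p + 1) j = excSum (xv n) (yv n) 1 p (j - 1) := by
  unfold aij excSum
  refine Finset.sum_congr rfl fun γ _ => Finset.prod_congr rfl fun k _ => ?_
  congr 2
  omega

/-- Proposition `prop-aijRelation`: for `1 ≤ i ≤ n`, the polynomial
`∑_{j=i}^{n} a_{ij}(x,y)·(x_j − y_j)` lies in `I_n`; in particular it acts by zero on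
the quotient `P/I_n`. -/
theorem aij_sum_mem_In (n : ℕ) (hn : 1 ≤ n) (i : ℕ) (hi : 1 ≤ i) (hin : i ≤ n) :
    (∑ j ∈ Finset.Icc i n, aij n i j * (xv n j - yv n j)) ∈ Ik n n ∧
    ∀ g : PP n ⧸ Ik n n,
      Ideal.Quotient.mk (Ik n n) (∑ j ∈ Finset.Icc i n, aij n i j * (xv n j - yv n j)) * g
        = 0 := by
  have hmem : (∑ j ∈ Finset.Icc i n, aij n i j * (xv n j - yv n j)) ∈ Ik n n := by
    obtain ⟨p, rfl⟩ : ∃ p, i = p + 1 := ⟨i - 1, by omega⟩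
    simp only [aij_eq_excSum]
    rw [sum_excSum _ _ _ _ (by omega), neg_mem_iff, ← Ideal.Quotient.eq_zero_iff_mem,
      map_excSum]
    exact excSum_eq_zero _ _ _ _ hi hin (prod_yv_eq_prod_xv n)
  refine ⟨hmem, fun g => ?_⟩
  rw [Ideal.Quotient.eq_zero_iff_mem.2 hmem, zero_mul]

end
end

section
/- Let n ≥ 1. The polynomial ∏_{i=1}^{n}(y_i − x_n) lies in the ideal I_n of ℚ[x_1,…,x_n,y_1,…,y_n]; that is, its class is zero in ℚ[x_1,…,x_n,y_1,…,y_n]/I_n. -/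
/-! By Vieta, `∏ᵢ (t + yᵢ) = ∑ⱼ eⱼ(y) t^(n-j)` and likewise for `x`, for every `t`. The generators
`eⱼ(y) - eⱼ(x)`, `1 ≤ j ≤ n`, of `Iₙ` thus give `∏ᵢ (t + yᵢ) ≡ ∏ᵢ (t + xᵢ)` modulo `Iₙ` (the terms
`j = 0` agree since `e₀ = 1`). At `t = -xₙ` the right-hand side has the zero factor `xₙ - xₙ`. -/

open MvPolynomial

noncomputable section

/-- Vieta's formula, transported along a ring homomorphism out of the polynomial ring and
evaluated at an element of the target. -/
theorem prod_add_map_X {n : ℕ} (φ : MvPolynomial (Fin n) ℚ →+* PP n) (t : PP n) :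
    ∏ i : Fin n, (t + φ (X i)) =
      ∑ j ∈ Finset.range (n + 1), φ (esymm (Fin n) ℚ j) * t ^ (n - j) := by
  have h := congrArg (Polynomial.eval₂ φ t) (MvPolynomial.prod_C_add_X_eq_sum_esymm ℚ (Fin n))
  simpa [Polynomial.eval₂_finsetProd, Polynomial.eval₂_finsetSum, Polynomial.eval₂_mul,
    Polynomial.eval₂_pow] using h

theorem prod_add_y_sub_prod_add_x_mem (n : ℕ) (t : PP n) :
    ∏ i : Fin n, (t + X (Sum.inr i)) - ∏ i : Fin n, (t + X (Sum.inl i)) ∈ Ik n n := by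
  have hy := prod_add_map_X (rename (R := ℚ) (Sum.inr : Fin n → Fin n ⊕ Fin n)).toRingHom t
  have hx := prod_add_map_X (rename (R := ℚ) (Sum.inl : Fin n → Fin n ⊕ Fin n)).toRingHom t
  simp only [AlgHom.toRingHom_eq_coe, RingHom.coe_coe, rename_X] at hx hy
  rw [hx, hy, ← Finset.sum_sub_distrib]
  refine Ideal.sum_mem _ fun j hj => ?_
  rw [← sub_mul]
  refine Ideal.mul_mem_right _ _ ?_
  rcases Nat.eq_zero_or_pos j with rfl | hpos
  · simp
  · exact Ideal.subset_span
      (Or.inl ⟨j, ⟨hpos, Nat.lt_succ_iff.mp (Finset.mem_range.mp hj)⟩, rfl⟩)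

theorem prod_Icc_yv_sub_xv (n : ℕ) (hn : 1 ≤ n) :
    ∏ i ∈ Finset.Icc 1 n, (yv n i - xv n n) = ∏ i : Fin n, (-xv n n + X (Sum.inr i)) := by
  rw [← Finset.Ico_add_one_right_eq_Icc, Finset.prod_Ico_eq_prod_range, Nat.add_sub_cancel,
    Finset.prod_range]
  refine Finset.prod_congr rfl fun i _ => ?_
  have hy : yv n (1 + i) = X (Sum.inr i) := by
    have h : (1 + (i : ℕ) - 1) % n = i := by
      rw [Nat.add_sub_cancel_left, Nat.mod_eq_of_lt i.isLt]
    simp only [yv, dif_pos (show 0 < n from hn), h]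
  rw [hy]
  ring

/-- the polynomial `∏_{i=1}^{n}(y_i − x_n)` lies in the ideal `I_n`;
that is, its class is zero in `P/I_n`. -/
theorem prod_y_sub_xn_mem_In (n : ℕ) (hn : 1 ≤ n) :
    (∏ i ∈ Finset.Icc 1 n, (yv n i - xv n n)) ∈ Ik n n ∧
    Ideal.Quotient.mk (Ik n n) (∏ i ∈ Finset.Icc 1 n, (yv n i - xv n n)) = 0 := by
  have hmem : (∏ i ∈ Finset.Icc 1 n, (yv n i - xv n n)) ∈ Ik n n := by
    have h := prod_add_y_sub_prod_add_x_mem n (-xv n n)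
    have hzero : ∏ i : Fin n, (-xv n n + X (Sum.inl i)) = 0 := by
      refine Finset.prod_eq_zero (Finset.mem_univ ⟨(n - 1) % n, Nat.mod_lt _ hn⟩) ?_
      simp only [xv, dif_pos (show 0 < n from hn), neg_add_cancel]
    rwa [hzero, sub_zero, ← prod_Icc_yv_sub_xv n hn] at h
  exact ⟨hmem, Ideal.Quotient.eq_zero_iff_mem.mpr hmem⟩

end
end

section
/- Let n ≥ 2. For every polynomial f in the ideal I_{n−1}, the product f·∏_{i=1}^{n−1}(y_i − x_n) lies in the ideal I_n. Consequently, multiplication by ∏_{i=1}^{n−1}(y_i − x_n) induces a well-defined homomorphism of ℚ[x_1,…,x_n,y_1,…,y_n]-modules from P/I_{n−1} to P/I_n sending the class of 1 to the class of ∏_{i=1}^{n−1}(y_i − x_n). -/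
/-!
Only the generator `y_n - x_n` of `I_{n-1}` is not already a generator of `I_n`. Its product with
`∏_{i<n} (y_i - x_n)` is `∏_i (y_i - x_n)`, taken over all `i`. Since `∏_i (x_i - x_n) = 0`, Vieta's
formula for the polynomials `∏_i (t + y_i)` and `∏_i (t + x_i)` at `t = -x_n` gives
`∏_i (y_i - x_n) = ∑_j (e_j(y) - e_j(x)) (-x_n)^{n-j}`, which is a combination of the generators
of `I_n` because the `j = 0` term vanishes. The module map is then the factorisation of
multiplication by the product through the quotient.
-/

open MvPolynomial

noncomputable section

/-- Vieta's formula, pushed along an algebra homomorphism and evaluated at `a`. -/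
theorem prod_add_eq_sum_esymm {A : Type*} [CommRing A] [Algebra ℚ A] (n : ℕ)
    (φ : MvPolynomial (Fin n) ℚ →ₐ[ℚ] A) (a : A) :
    ∏ i : Fin n, (a + φ (X i)) =
      ∑ j ∈ Finset.range (n + 1), φ (esymm (Fin n) ℚ j) * a ^ (n - j) := by
  have h := congrArg (Polynomial.eval₂ (φ : MvPolynomial (Fin n) ℚ →+* A) a)
    (MvPolynomial.prod_C_add_X_eq_sum_esymm (R := ℚ) (σ := Fin n))
  simpa [Polynomial.eval₂_finsetProd, Polynomial.eval₂_finsetSum, Polynomial.eval₂_mul] using h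

/-- Modulo `I_n` the polynomials `∏_i (t + y_i)` and `∏_i (t + x_i)` in `t` agree, and the second
vanishes at `t = -x_k`. -/
theorem prod_sub_mem_Ik (n : ℕ) (k : Fin n) :
    ∏ i : Fin n, (X (Sum.inr i) - X (Sum.inl k) : PP n) ∈ Ik n n := by
  have hy := prod_add_eq_sum_esymm n (rename (Sum.inr : Fin n → Fin n ⊕ Fin n))
    (-X (Sum.inl k) : PP n)
  have hx := prod_add_eq_sum_esymm n (rename (Sum.inl : Fin n → Fin n ⊕ Fin n))
    (-X (Sum.inl k) : PP n)
  rw [Finset.prod_eq_zero (Finset.mem_univ k) (by simp)] at hx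
  have key : ∏ i : Fin n, (X (Sum.inr i) - X (Sum.inl k) : PP n) =
      ∑ j ∈ Finset.range (n + 1), (ey n j - ex n j) * (-X (Sum.inl k) : PP n) ^ (n - j) := by
    simp only [sub_mul, Finset.sum_sub_distrib, ex, ey]
    rw [← hx, ← hy, sub_zero]
    exact Finset.prod_congr rfl fun i _ => by rw [rename_X]; ring
  rw [key]
  refine Ideal.sum_mem _ fun j hj => Ideal.mul_mem_right _ _ ?_
  rcases Nat.eq_zero_or_pos j with rfl | hj0
  · simp [ex, ey]
  · exact Ideal.subset_span (Or.inl ⟨j, ⟨hj0, by simpa [Nat.lt_succ_iff] using hj⟩, rfl⟩)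

/-- The hypotheses force `i` to be the last index, so the factor `y_n - x_n` completes the
product over the first `n - 1` indices to the product over all indices. -/
theorem prod_all_eq (n : ℕ) (hn : 2 ≤ n) (i : Fin n) (hi : n - 1 ≤ (i : ℕ)) :
    (X (Sum.inr i) - X (Sum.inl i) : PP n) *
      (∏ i ∈ Finset.Icc 1 (n - 1), (yv n i - xv n n)) =
    ∏ j : Fin n, (X (Sum.inr j) - X (Sum.inl i) : PP n) := by
  obtain ⟨m, rfl⟩ : ∃ m, n = m + 1 := ⟨n - 1, by omega⟩
  have hi' : i = Fin.last m := Fin.ext (by have := i.2; simp at hi ⊢; omega)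
  subst hi'
  have hx : xv (m + 1) (m + 1) = X (Sum.inl (Fin.last m)) := by
    simp only [xv, Nat.succ_pos, dif_pos]
    congr 2
    exact Fin.ext (by simp)
  have hy : ∀ j : Fin m, yv (m + 1) (j + 1) = X (Sum.inr j.castSucc) := by
    intro j
    simp only [yv, Nat.succ_pos, dif_pos]
    congr 2
    exact Fin.ext (by simp)
  rw [Fin.prod_univ_castSucc, mul_comm, hx]
  congr 1
  simp only [← hy]
  rw [Nat.add_sub_cancel,
    Fin.prod_univ_eq_prod_range (fun j => yv (m + 1) (j + 1) - X (Sum.inl (Fin.last m))) m,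
    Finset.range_eq_Ico,
    Finset.prod_Ico_add' (fun j => yv (m + 1) j - X (Sum.inl (Fin.last m))) 0 m 1]
  rfl

theorem mul_prod_mem_Ik (n : ℕ) (hn : 2 ≤ n) : ∀ f ∈ Ik n (n - 1),
    f * (∏ i ∈ Finset.Icc 1 (n - 1), (yv n i - xv n n)) ∈ Ik n n := by
  intro f hf
  induction hf using Submodule.span_induction with
  | mem f hf =>
    rcases hf with ⟨m, ⟨h1, h2⟩, rfl⟩ | ⟨i, hi, rfl⟩
    · exact Ideal.mul_mem_right _ _ (Ideal.subset_span (Or.inl ⟨m, ⟨h1, by omega⟩, rfl⟩))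
    · simp only [prod_all_eq n hn i hi]
      exact prod_sub_mem_Ik n i
  | zero => simp
  | add f g _ _ hf hg => rw [add_mul]; exact Ideal.add_mem _ hf hg
  | smul a f _ hf => rw [smul_eq_mul, mul_assoc]; exact Ideal.mul_mem_left _ _ hf

/-- for `n ≥ 2`, multiplication by `∏_{i=1}^{n−1}(y_i − x_n)` maps the
ideal `I_{n−1}` into `I_n`; consequently it induces a well-defined `P`-module homomorphism
`P/I_{n−1} → P/I_n` sending the class of `1` to the class of `∏_{i=1}^{n−1}(y_i − x_n)`. -/
theorem mul_ann_maps_In1_to_In (n : ℕ) (hn : 2 ≤ n) :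
    (∀ f ∈ Ik n (n - 1), f * (∏ i ∈ Finset.Icc 1 (n - 1), (yv n i - xv n n)) ∈ Ik n n) ∧
    ∃ μ : (PP n ⧸ Ik n (n - 1)) →ₗ[PP n] (PP n ⧸ Ik n n),
      (∀ p : PP n, μ (Ideal.Quotient.mk (Ik n (n - 1)) p) =
        Ideal.Quotient.mk (Ik n n) (p * ∏ i ∈ Finset.Icc 1 (n - 1), (yv n i - xv n n))) ∧
      μ (Ideal.Quotient.mk (Ik n (n - 1)) 1) =
        Ideal.Quotient.mk (Ik n n) (∏ i ∈ Finset.Icc 1 (n - 1), (yv n i - xv n n)) := by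
  have h := mul_prod_mem_Ik n hn
  have hμ : ∀ p : PP n, Submodule.mapQ (Ik n (n - 1)) (Ik n n)
      (LinearMap.mulRight (PP n) (∏ i ∈ Finset.Icc 1 (n - 1), (yv n i - xv n n))) h
      (Ideal.Quotient.mk (Ik n (n - 1)) p) =
      Ideal.Quotient.mk (Ik n n) (p * ∏ i ∈ Finset.Icc 1 (n - 1), (yv n i - xv n n)) :=
    fun p => rfl
  exact ⟨h, _, hμ, by rw [hμ, one_mul]⟩

end
end

section
/- Let n ≥ 2. Then I_n ⊆ I_{n−1}, and moreover I_{n−1} = I_n + (y_n − x_n)·P, where (y_n − x_n)·P denotes the principal ideal generated by y_n − x_n. Consequently the identity map of P induces a well-defined surjective P-module homomorphism P/I_n → P/I_{n−1} whose kernel is generated by the class of y_n − x_n. -/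
/-!
The ideals `I_n` and `I_{n-1}` have the generators `e_m(y) - e_m(x)`, `1 ≤ m ≤ n - 1`, in common;
`I_n` has the further generator `e_n(y) - e_n(x)`, and `I_{n-1}` the further generator `y_n - x_n`.
So everything follows from `e_n(y) - e_n(x) ∈ I_{n-1}` (`ey_sub_ex_top_mem`).

Modulo `I_{n-1}`, the polynomials `∏ (t - x_i)` and `∏ (t - y_i)` agree in all coefficients except
possibly the constant one, and `x_n = y_n` is a root of both. Evaluating there shows that the
constant coefficients `(-1)^n e_n(x)` and `(-1)^n e_n(y)` agree as well (`aeval_esymm_top_eq`).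
The homomorphism is the canonical projection of quotients, with kernel
`I_{n-1} / I_n = (I_n + (y_n - x_n)) / I_n`.
-/


open MvPolynomial

noncomputable section

/-- The relation `∏ i, (t - z i) = 0` for `t` one of the `z i`, expanded in elementary
symmetric polynomials. -/
lemma sum_esymm_mul_pow_eq_zero {n : ℕ} {R : Type*} [CommRing R] [Algebra ℚ R]
    (z : Fin n → R) (i : Fin n) :
    ∑ j ∈ Finset.range (n + 1),
      (-1) ^ j * (aeval z (esymm (Fin n) ℚ j) * z i ^ (n - j)) = 0 := by
  have h := congrArg (Polynomial.eval (z i))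
    (Multiset.prod_X_sub_X_eq_sum_esymm (Finset.univ.val.map z))
  rw [Polynomial.eval_multiset_prod, Multiset.map_map, Multiset.map_map] at h
  rw [Multiset.prod_eq_zero (Multiset.mem_map.2 ⟨i, Finset.mem_univ_val i, by simp⟩)] at h
  simpa [Polynomial.eval_finsetSum, aeval_esymm_eq_multiset_esymm] using h.symm

/-- If two families share one entry and all elementary symmetric functions of degree
`1, …, n - 1`, they also share the one of degree `n`: their monic polynomials differ by a constant
and have a common root. -/
lemma aeval_esymm_top_eq {n : ℕ} {R : Type*} [CommRing R] [Algebra ℚ R]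
    (a b : Fin n → R) (i : Fin n) (hi : a i = b i)
    (h : ∀ m, 1 ≤ m → m ≤ n - 1 → aeval a (esymm (Fin n) ℚ m) = aeval b (esymm (Fin n) ℚ m)) :
    aeval a (esymm (Fin n) ℚ n) = aeval b (esymm (Fin n) ℚ n) := by
  have ha := sum_esymm_mul_pow_eq_zero a i
  have hb := sum_esymm_mul_pow_eq_zero b i
  rw [Finset.sum_range_succ] at ha hb
  have hs : ∑ j ∈ Finset.range n,
        (-1 : R) ^ j * (aeval a (esymm (Fin n) ℚ j) * a i ^ (n - j)) =
      ∑ j ∈ Finset.range n, (-1 : R) ^ j * (aeval b (esymm (Fin n) ℚ j) * b i ^ (n - j)) := by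
    refine Finset.sum_congr rfl fun j hj => ?_
    rw [Finset.mem_range] at hj
    rcases Nat.eq_zero_or_pos j with rfl | hj0
    · simp [hi]
    · rw [h j hj0 (by omega), hi]
  rw [hs, ← hb] at ha
  have h1 := add_left_cancel ha
  simp only [Nat.sub_self, pow_zero, mul_one] at h1
  exact ((isUnit_one.neg).pow n).mul_left_cancel h1

lemma yv_sub_xv_mem (n : ℕ) (hn : 2 ≤ n) : yv n n - xv n n ∈ Ik n (n - 1) := by
  have h0 : 0 < n := by omega
  rw [yv, xv, dif_pos h0, dif_pos h0]
  refine Ideal.subset_span (Or.inr ⟨⟨(n - 1) % n, Nat.mod_lt _ h0⟩, ?_, rfl⟩)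
  simp only [Set.mem_ofPred_eq, Nat.mod_eq_of_lt (show n - 1 < n by omega), le_refl]

/-- The only generator of `I_n` that is not visibly in `I_{n-1}`: in `P / I_{n-1}` the classes of
the `x_i` and of the `y_i` satisfy the hypotheses of `aeval_esymm_top_eq`. -/
lemma ey_sub_ex_top_mem (n : ℕ) (hn : 2 ≤ n) : ey n n - ex n n ∈ Ik n (n - 1) := by
  have h0 : 0 < n := by omega
  let q := Ideal.Quotient.mkₐ ℚ (Ik n (n - 1))
  have hy (m : ℕ) : q (ey n m) = aeval (fun i => q (X (Sum.inr i))) (esymm (Fin n) ℚ m) := by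
    have h : q.comp (rename Sum.inr) = aeval fun i => q (X (Sum.inr i)) := by
      ext i
      simp
    rw [ey, ← h, AlgHom.comp_apply]
  have hx (m : ℕ) : q (ex n m) = aeval (fun i => q (X (Sum.inl i))) (esymm (Fin n) ℚ m) := by
    have h : q.comp (rename Sum.inl) = aeval fun i => q (X (Sum.inl i)) := by
      ext i
      simp
    rw [ex, ← h, AlgHom.comp_apply]
  have hq (p r : PP n) : q p = q r ↔ p - r ∈ Ik n (n - 1) := Ideal.Quotient.eq
  rw [← hq, hy, hx]
  refine aeval_esymm_top_eq _ _ ⟨(n - 1) % n, Nat.mod_lt _ h0⟩ ?_ fun m h1 h2 => ?_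
  · have := yv_sub_xv_mem n hn
    rw [yv, xv, dif_pos h0, dif_pos h0] at this
    exact (hq _ _).2 this
  · rw [← hy, ← hx, hq]
    exact Ideal.subset_span (Or.inl ⟨m, ⟨h1, h2⟩, rfl⟩)

lemma Ik_top_le (n : ℕ) (hn : 2 ≤ n) : Ik n n ≤ Ik n (n - 1) := by
  refine Ideal.span_le.2 ?_
  rintro _ (⟨m, ⟨h1, h2⟩, rfl⟩ | ⟨i, hi, rfl⟩)
  · rcases h2.eq_or_lt with rfl | h2
    · exact ey_sub_ex_top_mem m hn
    · exact Ideal.subset_span (Or.inl ⟨m, ⟨h1, by omega⟩, rfl⟩)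
  · exact absurd i.2 (not_lt.2 hi)

lemma Ik_pred_eq (n : ℕ) (hn : 2 ≤ n) :
    Ik n (n - 1) = Ik n n ⊔ Ideal.span {yv n n - xv n n} := by
  refine le_antisymm (Ideal.span_le.2 ?_) (sup_le (Ik_top_le n hn) ?_)
  · rintro _ (⟨m, ⟨h1, h2⟩, rfl⟩ | ⟨i, hi, rfl⟩)
    · exact Ideal.mem_sup_left (Ideal.subset_span (Or.inl ⟨m, ⟨h1, by omega⟩, rfl⟩))
    · refine Ideal.mem_sup_right (Ideal.subset_span ?_)
      have h0 : 0 < n := by omega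
      have hi' : n - 1 ≤ (i : ℕ) := hi
      have : i = ⟨(n - 1) % n, Nat.mod_lt _ h0⟩ := by
        ext
        simp only [Nat.mod_eq_of_lt (show n - 1 < n by omega)]
        omega
      rw [Set.mem_singleton_iff, yv, xv, dif_pos h0, dif_pos h0, ← this]
  · exact (Ideal.span_singleton_le_iff_mem _).2 (yv_sub_xv_mem n hn)

/-- for `n ≥ 2`, `I_n ⊆ I_{n−1}` and `I_{n−1} = I_n + (y_n − x_n)·P`.
Consequently the identity of `P` induces a well-defined surjective `P`-module homomorphism
`P/I_n → P/I_{n−1}` whose kernel is generated by the class of `y_n − x_n`. -/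
theorem In_le_In1_and_quotient (n : ℕ) (hn : 2 ≤ n) :
    Ik n n ≤ Ik n (n - 1) ∧
    Ik n (n - 1) = Ik n n ⊔ Ideal.span {yv n n - xv n n} ∧
    ∃ π : (PP n ⧸ Ik n n) →ₗ[PP n] (PP n ⧸ Ik n (n - 1)),
      (∀ p : PP n, π (Ideal.Quotient.mk (Ik n n) p) = Ideal.Quotient.mk (Ik n (n - 1)) p) ∧
      Function.Surjective π ∧
      LinearMap.ker π =
        Submodule.span (PP n) {Ideal.Quotient.mk (Ik n n) (yv n n - xv n n)} := by
  refine ⟨Ik_top_le n hn, Ik_pred_eq n hn, Submodule.factor (Ik_top_le n hn), fun p => rfl,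
    Submodule.factor_surjective _, ?_⟩
  rw [Submodule.factor, Submodule.ker_mapQ, Submodule.comap_id, Ik_pred_eq n hn,
    Submodule.map_sup, Submodule.mkQ_map_self, bot_sup_eq, Ideal.span, Submodule.map_span,
    Set.image_singleton]
  rfl

end
end

section
/- Let n ≥ 2. Write B_k := P/I_k, let π : B_n → B_{n−1} be the canonical quotient map, let z : B_n → B_n be multiplication by the class of y_n − x_n, and let μ : B_{n−1} → B_n be the P-module map induced by multiplication by a_{nn} = ∏_{i=1}^{n−1}(y_i − x_n). Then the four-term complex 0 → B_{n−1} → B_n → B_n → B_{n−1} → 0 with maps μ, z, π is exact: μ is injective, ker z = im μ, ker π = im z, and π is surjective. -/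
/-!
Let `J` be the ideal generated by `e_m(y) - e_m(x)` for `1 ≤ m ≤ n - 1`, and put `z = y_n - x_n`,
`w = ∏_{i<n} (y_n - x_i)`. Modulo `J` the polynomials `∏ (T - y_i)` and `∏ (T - x_i)` differ by a
constant, namely `±(e_n(y) - e_n(x))`; evaluating at `T = y_n` shows that this constant is `-z w`.
Hence `I_n = J + (z w)` (`mem_Ik_top_iff`), while `I_{n-1} = J + (z)` (`mem_Ik_pred_iff`).

If `z` and `w` are regular modulo `J`, then in `P/(J + (z w))` the annihilator of `z` is `(w)` and
that of `w` is `(z)`, which is the exactness with `w` in place of `a_{nn}`. The two agree up to sign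
modulo `I_n` (`ww_sub_aa`), both being a divided difference of `∏ (T - x_i) = ∏ (T - y_i)` at
`x_n, y_n`.

Regularity holds because `z` and `w` are nonzero elements of the domain `ℚ[x][y_n]`, and `P/J` is
the universal algebra over it in which a certain monic polynomial of degree `n - 1` splits into
linear factors (`mem_Jk_of_emb_mul_mem`). Such an algebra is obtained by adjoining roots of monic
polynomials successively, so it is free over the base (`split_cancel`).
-/


open MvPolynomial

noncomputable section

/-! ### The universal splitting algebra -/

/-- If `d` is not a zero divisor in `D`, it is not a zero divisor in the universal `D`-algebra over
which the monic polynomial `G` of degree `k` splits as `∏ (T - y_i)`. Vanishing of `p` in that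
algebra is expressed by `eval₂ f y p = 0` for every `f : D →+* A` and every splitting `y` of `G` in
`A`. One root at a time: `AdjoinRoot G` is free over `D`, so `d` stays regular there, and
`G / (T - root)` is monic of degree one less. -/
theorem split_cancel (k : ℕ) : ∀ (D : Type) [CommRing D] (G : Polynomial D) (_ : G.Monic)
    (_ : G.natDegree = k) (d : D) (_ : d ∈ nonZeroDivisors D) (p : MvPolynomial (Fin k) D)
    (_ : ∀ (A : Type) [CommRing A] (f : D →+* A) (y : Fin k → A),
      G.map f = ∏ i, (Polynomial.X - Polynomial.C (y i)) → f d * eval₂ f y p = 0)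
    (A : Type) [CommRing A] (f : D →+* A) (y : Fin k → A),
      G.map f = ∏ i, (Polynomial.X - Polynomial.C (y i)) → eval₂ f y p = 0 := by
  induction k with
  | zero =>
    intro D _ G hG hk d hd p h A _ f y hy
    obtain ⟨c, rfl⟩ := MvPolynomial.C_surjective (Fin 0) p
    have h1 : G = 1 := hG.natDegree_eq_zero.mp hk
    have := h D (RingHom.id D) Fin.elim0 (by simp [h1])
    simp only [eval₂_C, RingHom.id_apply] at this ⊢
    rw [(mul_left_mem_nonZeroDivisors_eq_zero_iff hd).mp this, map_zero]
  | succ k ih =>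
    intro D _ G hG hk d hd p h A _ f y hy
    have hroot : (G.map (AdjoinRoot.of G)).IsRoot (AdjoinRoot.root G) := AdjoinRoot.isRoot_root G
    set r := AdjoinRoot.root G
    obtain ⟨G', hG'⟩ := Polynomial.dvd_iff_isRoot.mpr hroot
    have hmon : G'.Monic := (Polynomial.monic_X_sub_C r).of_mul_monic_left
      (hG' ▸ hG.map (AdjoinRoot.of G))
    -- Substituting `root G` for the first variable of `p` turns splittings of `G'` over
    -- `AdjoinRoot G` into splittings of `G` over `D`.
    have key : ∀ (A : Type) [CommRing A] (f : AdjoinRoot G →+* A) (y : Fin k → A),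
        eval₂ f y (eval₂ (C.comp (AdjoinRoot.of G)) (Fin.cons (C r) X) p) =
          eval₂ (f.comp (AdjoinRoot.of G)) (Fin.cons (f r) y) p := by
      intro A _ f y
      rw [← coe_eval₂Hom f y, MvPolynomial.hom_eval₂]
      congr 1
      · ext; simp
      · funext i
        refine Fin.cases ?_ (fun i => ?_) i <;> simp
    have hy0 : G.eval₂ f (y 0) = 0 := by
      rw [← Polynomial.eval_map, hy, Polynomial.eval_prod]
      exact Finset.prod_eq_zero (Finset.mem_univ 0) (by simp)
    have hfree := hG.free_adjoinRoot
    have hd' : AdjoinRoot.of G d ∈ nonZeroDivisors (AdjoinRoot G) := by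
      rw [mem_nonZeroDivisors_iff_right]
      intro x hx
      let b := Module.Free.chooseBasis D (AdjoinRoot G)
      have hx' : d • x = 0 := by rw [Algebra.smul_def, mul_comm]; exact hx
      apply b.repr.map_eq_zero_iff.mp
      ext i
      have := congrArg (fun v => b.repr v i) hx'
      simpa [mul_left_mem_nonZeroDivisors_eq_zero_iff hd] using this
    have hspec := ih (AdjoinRoot G) G' hmon ?_ (AdjoinRoot.of G d) hd'
      (eval₂ (C.comp (AdjoinRoot.of G)) (Fin.cons (C r) X) p) ?_ A
      (AdjoinRoot.lift f (y 0) hy0) (Fin.tail y) ?_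
    · rw [key] at hspec
      convert hspec using 2
      · ext; simp
      · simp [r]
    · have hne : (1 : AdjoinRoot G) ≠ 0 := by
        intro h1
        have hD : Nontrivial D := by
          by_contra hD
          rw [not_nontrivial_iff_subsingleton] at hD
          rw [Subsingleton.elim G 0, Polynomial.natDegree_zero] at hk
          omega
        rw [← map_one (AdjoinRoot.mk G), AdjoinRoot.mk_eq_zero] at h1
        exact hG.not_dvd_of_natDegree_lt one_ne_zero (by simp [hk]) h1
      have : Nontrivial (AdjoinRoot G) := ⟨1, 0, hne⟩
      have := congrArg Polynomial.natDegree hG'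
      rw [hG.natDegree_map, (Polynomial.monic_X_sub_C r).natDegree_mul hmon, hk,
        Polynomial.natDegree_X_sub_C] at this
      omega
    · intro B _ g u hu
      rw [key]
      apply h B (g.comp (AdjoinRoot.of G)) (Fin.cons (g r) u)
      rw [← Polynomial.map_map, hG', Polynomial.map_mul, hu, Fin.prod_univ_succ]
      simp
    · apply (Polynomial.monic_X_sub_C (y 0)).isRegular.left
      have := congrArg (Polynomial.map (AdjoinRoot.lift f (y 0) hy0)) hG'
      rw [Polynomial.map_map, Polynomial.map_mul] at this
      simp only [Fin.tail]
      rw [← Fin.prod_univ_succ (fun i => Polynomial.X - Polynomial.C (y i)), ← hy]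
      have e : (AdjoinRoot.lift f (y 0) hy0).comp (AdjoinRoot.of G) = f := by ext; simp
      rw [e] at this
      simpa [r] using this.symm

/-! ### Comparing `∏ (T - y_i)` and `∏ (T - x_i)` -/

/-- Vieta: the coefficients of `∏ (T - y_i) - ∏ (T - x_i)` are, up to sign, the differences
`e_j(y) - e_j(x)`. -/
theorem prod_sub_prod (n : ℕ) {A : Type} [CommRing A] (h : PP n →+* A) :
    ∏ i : Fin n, (Polynomial.X - Polynomial.C (h (X (Sum.inr i)))) -
      ∏ i : Fin n, (Polynomial.X - Polynomial.C (h (X (Sum.inl i)))) =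
    ∑ j ∈ Finset.range (n + 1),
      Polynomial.C ((-1) ^ j * h (ey n j - ex n j)) * Polynomial.X ^ (n - j) := by
  have main : ∀ s : Fin n → Fin n ⊕ Fin n,
      ∏ i : Fin n, (Polynomial.X - Polynomial.C (h (X (s i)))) =
      ∑ j ∈ Finset.range (n + 1),
        Polynomial.C ((-1) ^ j * h (rename s (esymm (Fin n) ℚ j))) * Polynomial.X ^ (n - j) := by
    intro s
    have := Multiset.prod_X_sub_X_eq_sum_esymm
      (Finset.univ.val.map (fun i : Fin n => (X (s i) : PP n)))
    have := congrArg (Polynomial.map h) this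
    simp only [Multiset.map_map, Multiset.card_map, Finset.card_val, Finset.card_univ,
      Fintype.card_fin] at this
    have h2 : Multiset.prod (Multiset.map
      ((fun t : PP n => Polynomial.X - Polynomial.C t) ∘ fun i => X (s i)) Finset.univ.val)
       = ∏ i : Fin n, (Polynomial.X - Polynomial.C (X (s i) : PP n)) := rfl
    rw [h2, Polynomial.map_prod, Polynomial.map_sum] at this
    simp only [Polynomial.map_sub, Polynomial.map_X, Polynomial.map_C] at this
    rw [this]
    refine Finset.sum_congr rfl fun j _ => ?_
    rw [← aeval_esymm_eq_multiset_esymm (Fin n) ℚ, rename_eq_aeval]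
    simp [mul_assoc, Function.comp_def]
  rw [main, main, ← Finset.sum_sub_distrib]
  refine Finset.sum_congr rfl fun j _ => ?_
  rw [map_sub h, mul_sub, map_sub, sub_mul]; rfl

/-- Modulo `e_m(y) - e_m(x)` for `1 ≤ m < n = k + 1`, the polynomials `∏ (T - y_i)` and
`∏ (T - x_i)` differ by a constant only. -/
theorem prod_sub_prod_eq_C (k : ℕ) {A : Type} [CommRing A] (h : PP (k + 1) →+* A)
    (hJ : ∀ m, 1 ≤ m → m ≤ k → h (ey (k + 1) m - ex (k + 1) m) = 0) :
    ∏ i : Fin (k + 1), (Polynomial.X - Polynomial.C (h (X (Sum.inr i)))) -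
      ∏ i : Fin (k + 1), (Polynomial.X - Polynomial.C (h (X (Sum.inl i)))) =
    Polynomial.C ((-1) ^ (k + 1) * h (ey (k + 1) (k + 1) - ex (k + 1) (k + 1))) := by
  rw [prod_sub_prod, Finset.sum_range_succ, Finset.sum_eq_zero]
  · simp
  · intro j hj
    rcases Nat.eq_zero_or_pos j with rfl | hj0
    · simp [ey, ex]
    · rw [hJ j hj0 (by simpa [Nat.lt_succ_iff] using hj)]
      simp

theorem theta_eq_zero_of_prod_sub_prod (k : ℕ) {A : Type} [CommRing A] (h : PP (k + 1) →+* A)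
    (c : A)
    (hc : ∏ i : Fin (k + 1), (Polynomial.X - Polynomial.C (h (X (Sum.inr i)))) -
      ∏ i : Fin (k + 1), (Polynomial.X - Polynomial.C (h (X (Sum.inl i)))) = Polynomial.C c)
    (m : ℕ) (h1 : 1 ≤ m) (h2 : m ≤ k) : h (ey (k + 1) m - ex (k + 1) m) = 0 := by
  rw [prod_sub_prod] at hc
  have := congrArg (fun q => Polynomial.coeff q (k + 1 - m)) hc
  simp only [Polynomial.finsetSum_coeff, Polynomial.coeff_C_mul, Polynomial.coeff_X_pow] at this
  rw [Polynomial.coeff_C_of_ne_zero (by omega), Finset.sum_eq_single m] at this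
  · rw [if_pos rfl, mul_one] at this
    rcases neg_one_pow_eq_or A m with e | e <;> simpa only [e, one_mul, neg_mul, neg_eq_zero] using this
  · intro j hj hjm
    rw [if_neg, mul_zero]
    have := Finset.mem_range.mp hj
    omega
  · intro hm
    exact absurd (Finset.mem_range.mpr (by omega)) hm

/-! ### Elements of `ℚ[x, y_n]` are regular modulo `J` -/

/-- The ideal `J` generated by `e_m(y) - e_m(x)` for `1 ≤ m ≤ k = n - 1`. -/
def Jk (k : ℕ) : Ideal (PP (k + 1)) :=
  Ideal.span ((fun m => ey (k + 1) m - ex (k + 1) m) '' {m : ℕ | 1 ≤ m ∧ m ≤ k})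

/-- The ring `ℚ[x_1,…,x_n][t]`; the variable `t` stands for `y_n`. -/
abbrev DD (k : ℕ) := Polynomial (MvPolynomial (Fin (k + 1)) ℚ)

/-- The inclusion `ℚ[x_1,…,x_n][t] → P` sending `t` to `y_n`. -/
def emb (k : ℕ) : DD k →+* PP (k + 1) :=
  Polynomial.eval₂RingHom (rename Sum.inl : _ →ₐ[ℚ] PP (k + 1)).toRingHom
    (X (Sum.inr (Fin.last k)))

/-- The identification of `P` with `ℚ[x_1,…,x_n][t][y_1,…,y_{n-1}]`, `t` being `y_n`. -/
def psi (k : ℕ) : PP (k + 1) →+* MvPolynomial (Fin k) (DD k) :=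
  eval₂Hom (C.comp (Polynomial.C.comp C)) (Sum.elim (fun i => C (Polynomial.C (X i)))
    (Fin.lastCases (motive := fun _ => MvPolynomial (Fin k) (DD k)) (C Polynomial.X) X))

@[simp] theorem psi_x (k : ℕ) (i : Fin (k + 1)) :
    psi k (X (Sum.inl i)) = C (Polynomial.C (X i)) := by simp [psi]
@[simp] theorem psi_C (k : ℕ) (r : ℚ) : psi k (C r) = C (Polynomial.C (C r)) := by simp [psi]
@[simp] theorem emb_C_C (k : ℕ) (r : ℚ) : emb k (Polynomial.C (C r)) = C r := by simp [emb]
@[simp] theorem psi_last (k : ℕ) :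
    psi k (X (Sum.inr (Fin.last k))) = C Polynomial.X := by simp [psi]
@[simp] theorem psi_castSucc (k : ℕ) (i : Fin k) :
    psi k (X (Sum.inr i.castSucc)) = X i := by simp [psi]
@[simp] theorem emb_X (k : ℕ) : emb k Polynomial.X = X (Sum.inr (Fin.last k)) := by simp [emb]
@[simp] theorem emb_C_X (k : ℕ) (i : Fin (k + 1)) :
    emb k (Polynomial.C (X i)) = X (Sum.inl i) := by simp [emb]

theorem psi_emb (k : ℕ) (d : DD k) : psi k (emb k d) = C d := by
  have : (psi k).comp (emb k) = C := by
    ext <;> simp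
  exact congrArg (fun g => g d) this

/-- Nonzero elements of `ℚ[x][y_n]` are not zero divisors modulo `J`: the ring `P/J` is the universal
splitting algebra over `ℚ[x][t]` of the monic polynomial `G` with `F(T) - F(t) = (T - t) G(T)`,
where `F(T) = ∏ (T - x_i)`. -/
theorem mem_Jk_of_emb_mul_mem (k : ℕ) (d : DD k) (hd : d ≠ 0) (p : PP (k + 1))
    (hp : emb k d * p ∈ Jk k) : p ∈ Jk k := by
  set F : Polynomial (DD k) :=
    ∏ i : Fin (k + 1), (Polynomial.X - Polynomial.C (Polynomial.C (X i))) with hF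
  have hFm : F.Monic := Polynomial.monic_prod_of_monic _ _ fun i _ => Polynomial.monic_X_sub_C _
  have hFd : F.natDegree = k + 1 := by
    rw [hF, Polynomial.natDegree_prod_of_monic _ _ fun i _ => Polynomial.monic_X_sub_C _]
    simp
  obtain ⟨G, hG⟩ := Polynomial.X_sub_C_dvd_sub_C_eval (p := F) (a := Polynomial.X)
  have hFc : (F - Polynomial.C (F.eval Polynomial.X)).Monic := by
    apply hFm.sub_of_left
    refine lt_of_le_of_lt Polynomial.degree_C_le ?_
    rw [Polynomial.degree_eq_natDegree hFm.ne_zero, hFd]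
    exact_mod_cast Nat.succ_pos k
  have hGm : G.Monic := (Polynomial.monic_X_sub_C _).of_mul_monic_left (hG ▸ hFc)
  have hGd : G.natDegree = k := by
    have := congrArg Polynomial.natDegree hG
    rw [Polynomial.natDegree_sub_C, hFd, (Polynomial.monic_X_sub_C _).natDegree_mul hGm,
      Polynomial.natDegree_X_sub_C] at this
    omega
  have hGmap : ∀ (A : Type) [CommRing A] (f : DD k →+* A),
      (Polynomial.X - Polynomial.C (f Polynomial.X)) * G.map f =
      ∏ i : Fin (k + 1), (Polynomial.X - Polynomial.C (f (Polynomial.C (X i)))) -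
        Polynomial.C (f (F.eval Polynomial.X)) := by
    intro A _ f
    have := congrArg (Polynomial.map f) hG
    rw [Polynomial.map_mul, hF, Polynomial.map_sub, Polynomial.map_prod] at this
    simpa using this.symm
  -- `p` vanishes in the universal splitting algebra of `G`, in particular in `P/J`.
  have hback : eval₂ ((Ideal.Quotient.mk (Jk k)).comp (emb k))
      (fun i : Fin k => Ideal.Quotient.mk (Jk k) (X (Sum.inr i.castSucc))) (psi k p) = 0 := by
    refine split_cancel k (DD k) G hGm hGd d (mem_nonZeroDivisors_of_ne_zero hd) (psi k p) ?_
      (PP (k + 1) ⧸ Jk k) _ _ ?_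
    · intro A _ f y hy
      -- A splitting of `G` makes `∏ (T - y_i)` equal to `F(T) - F(t)`, so `J` maps to zero.
      have hker : Jk k ≤ RingHom.ker ((eval₂Hom f y).comp (psi k)) := by
        rw [Jk, Ideal.span_le]
        rintro _ ⟨m, ⟨h1, h2⟩, rfl⟩
        refine theta_eq_zero_of_prod_sub_prod k _ (-f (F.eval Polynomial.X)) ?_ m h1 h2
        rw [Fin.prod_univ_castSucc]
        have := hGmap A f
        rw [hy, mul_comm] at this
        simp [this]
      have := hker hp
      rw [RingHom.mem_ker, map_mul, RingHom.comp_apply, RingHom.comp_apply, psi_emb] at this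
      simpa using this
    · apply (Polynomial.monic_X_sub_C
        (((Ideal.Quotient.mk (Jk k)).comp (emb k)) Polynomial.X)).isRegular.left
      have hc := prod_sub_prod_eq_C k (Ideal.Quotient.mk (Jk k)) (fun m h1 h2 =>
        Ideal.Quotient.eq_zero_iff_mem.mpr (Ideal.subset_span ⟨m, ⟨h1, h2⟩, rfl⟩))
      have he := congrArg (Polynomial.eval (Ideal.Quotient.mk (Jk k) (X (Sum.inr (Fin.last k))))) hc
      rw [Polynomial.eval_sub, Polynomial.eval_C, Polynomial.eval_prod, Polynomial.eval_prod,
        Fin.prod_univ_castSucc] at he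
      have e : (Ideal.Quotient.mk (Jk k)) (emb k (F.eval Polynomial.X)) =
          ∏ i : Fin (k + 1), (Ideal.Quotient.mk (Jk k) (X (Sum.inr (Fin.last k))) -
            Ideal.Quotient.mk (Jk k) (X (Sum.inl i))) := by
        rw [hF, Polynomial.eval_prod, map_prod, map_prod]
        simp
      simp only [Polynomial.eval_sub, Polynomial.eval_X, Polynomial.eval_C, sub_self, mul_zero,
        zero_sub] at he
      rw [← e] at he
      rw [← he, Fin.prod_univ_castSucc, map_neg] at hc
      dsimp only
      rw [hGmap]
      simp only [RingHom.comp_apply, emb_X, emb_C_X]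
      linear_combination -hc
  have hid : (eval₂Hom ((Ideal.Quotient.mk (Jk k)).comp (emb k))
      (fun i : Fin k => Ideal.Quotient.mk (Jk k) (X (Sum.inr i.castSucc)))).comp (psi k) =
      Ideal.Quotient.mk (Jk k) := by
    apply MvPolynomial.ringHom_ext
    · intro r
      simp
    · rintro (i | i)
      · simp
      · refine Fin.lastCases ?_ (fun i => ?_) i <;> simp
  rw [← Ideal.Quotient.eq_zero_iff_mem, ← hid]
  exact hback

/-! ### The ideals `I_n` and `I_{n-1}` in terms of `J`, `z` and `w` -/

/-- `z = y_n - x_n`. -/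
def zz (k : ℕ) : PP (k + 1) := X (Sum.inr (Fin.last k)) - X (Sum.inl (Fin.last k))
/-- `w = ∏_{i<n} (y_n - x_i)`. -/
def ww (k : ℕ) : PP (k + 1) := ∏ i : Fin k, (X (Sum.inr (Fin.last k)) - X (Sum.inl i.castSucc))
/-- `a_{nn} = ∏_{i<n} (y_i - x_n)`. -/
def aa (k : ℕ) : PP (k + 1) := ∏ i : Fin k, (X (Sum.inr i.castSucc) - X (Sum.inl (Fin.last k)))

theorem mem_of_zz_mul (k : ℕ) (p : PP (k + 1)) (hp : zz k * p ∈ Jk k) : p ∈ Jk k := by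
  refine mem_Jk_of_emb_mul_mem k (Polynomial.X - Polynomial.C (X (Fin.last k)))
    (Polynomial.monic_X_sub_C _).ne_zero p ?_
  simpa [zz] using hp

theorem mem_of_ww_mul (k : ℕ) (p : PP (k + 1)) (hp : ww k * p ∈ Jk k) : p ∈ Jk k := by
  refine mem_Jk_of_emb_mul_mem k
    (∏ i : Fin k, (Polynomial.X - Polynomial.C (X i.castSucc)))
    (Polynomial.monic_prod_of_monic _ _ fun i _ => Polynomial.monic_X_sub_C _).ne_zero p ?_
  simpa [ww, map_prod] using hp

/-- Modulo `J`, the product `z w` is `±(e_n(y) - e_n(x))`: evaluate the constant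
`∏ (T - y_i) - ∏ (T - x_i)` at `T = y_n`. -/
theorem zz_mul_ww (k : ℕ) :
    zz k * ww k - (-1) ^ k * (ey (k + 1) (k + 1) - ex (k + 1) (k + 1)) ∈ Jk k := by
  have hc := prod_sub_prod_eq_C k (Ideal.Quotient.mk (Jk k)) (fun m h1 h2 =>
    Ideal.Quotient.eq_zero_iff_mem.mpr (Ideal.subset_span ⟨m, ⟨h1, h2⟩, rfl⟩))
  have he := congrArg (Polynomial.eval (Ideal.Quotient.mk (Jk k) (X (Sum.inr (Fin.last k))))) hc
  rw [Polynomial.eval_sub, Polynomial.eval_C, Polynomial.eval_prod, Polynomial.eval_prod,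
    Fin.prod_univ_castSucc, Fin.prod_univ_castSucc] at he
  simp only [Polynomial.eval_sub, Polynomial.eval_X, Polynomial.eval_C, sub_self, mul_zero,
    zero_sub] at he
  rw [← Ideal.Quotient.eq_zero_iff_mem, zz, ww]
  simp only [map_sub, map_mul, map_prod, map_pow, map_neg, map_one] at he ⊢
  linear_combination -he

/-- `I_n = J + (z w)`. -/
theorem mem_Ik_top_iff (k : ℕ) (p : PP (k + 1)) :
    p ∈ Ik (k + 1) (k + 1) ↔ ∃ c, p - zz k * ww k * c ∈ Jk k := by
  have e : Ik (k + 1) (k + 1) = Ideal.span {zz k * ww k} ⊔ Jk k := by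
    have hz := zz_mul_ww k
    set θ := ey (k + 1) (k + 1) - ex (k + 1) (k + 1) with hθ
    have hs : ((-1) ^ k * (-1) ^ k : PP (k + 1)) = 1 := by
      rw [← mul_pow]; simp
    apply le_antisymm
    · rw [Ik, Ideal.span_le]
      rintro _ (⟨m, ⟨h1, h2⟩, rfl⟩ | ⟨i, hi, rfl⟩)
      · rcases Nat.lt_or_ge k m with hm | hm
        · obtain rfl : m = k + 1 := by omega
          rw [SetLike.mem_coe, Ideal.mem_span_singleton_sup]
          refine ⟨(-1) ^ k, -((-1) ^ k * (zz k * ww k - (-1) ^ k * θ)),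
            neg_mem (Ideal.mul_mem_left _ _ hz), ?_⟩
          linear_combination θ * hs
        · exact Ideal.mem_sup_right (Ideal.subset_span ⟨m, ⟨h1, hm⟩, rfl⟩)
      · have := i.2
        simp only [Set.mem_ofPred_eq] at hi
        omega
    · have hJ : Jk k ≤ Ik (k + 1) (k + 1) := by
        apply Ideal.span_mono
        rintro _ ⟨m, ⟨h1, h2⟩, rfl⟩
        exact Or.inl ⟨m, ⟨h1, by omega⟩, rfl⟩
      refine sup_le ?_ hJ
      rw [Ideal.span_singleton_le_iff_mem, ← sub_add_cancel (zz k * ww k) ((-1) ^ k * θ)]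
      refine add_mem (hJ hz) (Ideal.mul_mem_left _ _ (Ideal.subset_span ?_))
      exact Or.inl ⟨k + 1, ⟨by omega, le_rfl⟩, rfl⟩
  rw [e, Ideal.mem_span_singleton_sup]
  constructor
  · rintro ⟨c, b, hb, rfl⟩
    exact ⟨c, by convert hb using 1; ring⟩
  · rintro ⟨c, hc⟩
    exact ⟨c, _, hc, by ring⟩

/-- `I_{n-1} = J + (z)`. -/
theorem mem_Ik_pred_iff (k : ℕ) (p : PP (k + 1)) :
    p ∈ Ik (k + 1) k ↔ ∃ c, p - zz k * c ∈ Jk k := by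
  have e : Ik (k + 1) k = Ideal.span {zz k} ⊔ Jk k := by
    rw [Ik, Ideal.span_union, sup_comm, Jk]
    congr 2
    ext q
    simp only [Set.mem_image, Set.mem_ofPred_eq, Set.mem_singleton_iff, zz]
    constructor
    · rintro ⟨i, hi, rfl⟩
      rw [show i = Fin.last k from Fin.ext (by have := i.2; simp; omega)]
    · rintro rfl
      exact ⟨Fin.last k, by simp, rfl⟩
  rw [e, Ideal.mem_span_singleton_sup]
  constructor
  · rintro ⟨c, b, hb, rfl⟩
    exact ⟨c, by convert hb using 1; ring⟩
  · rintro ⟨c, hc⟩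
    exact ⟨c, _, hc, by ring⟩

/-- If `F = (T - v) f = (T - u) g`, then `g(v) = f(u)`: both are the divided difference of `F` at
`u, v`. Dividing `f - f(u)` by `T - u` makes this valid over any ring, even when `u - v` is a zero
divisor. -/
theorem eval_eq_eval_of_mul_eq_mul {S : Type} [CommRing S] (f g : Polynomial S) (u v : S)
    (h : (Polynomial.X - Polynomial.C v) * f = (Polynomial.X - Polynomial.C u) * g) :
    g.eval v = f.eval u := by
  obtain ⟨q, hq⟩ := Polynomial.X_sub_C_dvd_sub_C_eval (p := f) (a := u)
  have h0 : (u - v) * f.eval u = 0 := by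
    simpa using congrArg (Polynomial.eval u) h
  have h1 : Polynomial.C u * Polynomial.C (f.eval u) = Polynomial.C v * Polynomial.C (f.eval u) := by
    rw [← Polynomial.C_mul, ← Polynomial.C_mul]
    congr 1
    linear_combination h0
  have h2 : g = Polynomial.C (f.eval u) + (Polynomial.X - Polynomial.C v) * q := by
    apply (Polynomial.monic_X_sub_C u).isRegular.left
    dsimp only
    linear_combination -h + (Polynomial.X - Polynomial.C v) * hq + h1
  rw [h2]
  simp

/-- Modulo `I_n`, `w = ±a_{nn}`. Here `∏ (T - y_i) = ∏ (T - x_i)`, and `w` and `±a_{nn}` are both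
its divided difference at `x_n, y_n`. -/
theorem ww_sub_aa (k : ℕ) : ww k - (-1) ^ k * aa k ∈ Ik (k + 1) (k + 1) := by
  have hθ : ∀ m, 1 ≤ m → m ≤ k + 1 →
      Ideal.Quotient.mk (Ik (k + 1) (k + 1)) (ey (k + 1) m - ex (k + 1) m) = 0 :=
    fun m h1 h2 => Ideal.Quotient.eq_zero_iff_mem.mpr
      (Ideal.subset_span (Or.inl ⟨m, ⟨h1, h2⟩, rfl⟩))
  have hc := prod_sub_prod_eq_C k (Ideal.Quotient.mk (Ik (k + 1) (k + 1)))
    (fun m h1 h2 => hθ m h1 (by omega))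
  rw [hθ (k + 1) (by omega) le_rfl, mul_zero, map_zero, Fin.prod_univ_castSucc,
    Fin.prod_univ_castSucc, mul_comm, mul_comm (Finset.prod _ _), sub_eq_zero] at hc
  have := eval_eq_eval_of_mul_eq_mul _ _ _ _ hc
  rw [Polynomial.eval_prod, Polynomial.eval_prod] at this
  rw [← Ideal.Quotient.eq_zero_iff_mem, map_sub, sub_eq_zero, ww, aa]
  have e : ((-1) ^ k : PP (k + 1)) = ∏ i : Fin k, (-1) := by simp
  rw [e, ← Finset.prod_mul_distrib]
  simpa [map_prod] using this

/-! ### Exactness at the level of ideals -/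

/-- The annihilator of `z` modulo `I_n` is generated by `a_{nn}`. -/
theorem zz_mul_mem_iff (k : ℕ) (b : PP (k + 1)) :
    zz k * b ∈ Ik (k + 1) (k + 1) ↔ ∃ c, aa k * c - b ∈ Ik (k + 1) (k + 1) := by
  have hs : ((-1) ^ k * (-1) ^ k : PP (k + 1)) = 1 := by
    rw [← mul_pow]; simp
  have hw := ww_sub_aa k
  have hzw : zz k * ww k ∈ Ik (k + 1) (k + 1) :=
    (mem_Ik_top_iff k _).mpr ⟨1, by simp⟩
  constructor
  · intro h
    obtain ⟨c, hc⟩ := (mem_Ik_top_iff k _).mp h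
    have h1 : b - ww k * c ∈ Jk k := mem_of_zz_mul k _ (by convert hc using 1; ring)
    have h2 : b - ww k * c ∈ Ik (k + 1) (k + 1) := (mem_Ik_top_iff k _).mpr ⟨0, by simpa using h1⟩
    refine ⟨(-1) ^ k * c, ?_⟩
    convert neg_mem (add_mem h2 (Ideal.mul_mem_left _ c hw)) using 1
    ring
  · rintro ⟨c, hc⟩
    have h1 := Ideal.mul_mem_left _ (zz k) hc
    have h2 := Ideal.mul_mem_left _ (zz k * (-1) ^ k * c) hw
    have h3 := Ideal.mul_mem_left _ ((-1) ^ k * c) hzw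
    convert sub_mem (sub_mem h3 h2) h1 using 1
    linear_combination (-zz k * aa k * c) * hs

theorem mem_of_aa_mul_mem (k : ℕ) (p : PP (k + 1)) (hp : aa k * p ∈ Ik (k + 1) (k + 1)) :
    p ∈ Ik (k + 1) k := by
  have h1 : ww k * p ∈ Ik (k + 1) (k + 1) := by
    convert add_mem (Ideal.mul_mem_left _ p (ww_sub_aa k)) (Ideal.mul_mem_left _ ((-1) ^ k) hp)
      using 1
    ring
  obtain ⟨c, hc⟩ := (mem_Ik_top_iff k _).mp h1
  refine (mem_Ik_pred_iff k p).mpr ⟨c, mem_of_ww_mul k _ ?_⟩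
  convert hc using 1
  ring

/-- `I_{n-1} = I_n + (z)`. -/
theorem mem_Ik_pred_iff' (k : ℕ) (p : PP (k + 1)) :
    p ∈ Ik (k + 1) k ↔ ∃ c, zz k * c - p ∈ Ik (k + 1) (k + 1) := by
  rw [mem_Ik_pred_iff]
  constructor
  · rintro ⟨c, hc⟩
    refine ⟨c, (mem_Ik_top_iff k _).mpr ⟨0, ?_⟩⟩
    convert neg_mem hc using 1
    ring
  · rintro ⟨c, hc⟩
    obtain ⟨d, hd⟩ := (mem_Ik_top_iff k _).mp hc
    refine ⟨c - ww k * d, ?_⟩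
    convert neg_mem hd using 1
    ring

/-- with `B_k := P/I_k`, the four-term complex
`0 → B_{n−1} →(μ) B_n →(z) B_n →(π) B_{n−1} → 0` is exact, where `π` is the canonical
quotient map, `z` is multiplication by the class of `y_n − x_n`, and `μ` is induced by
multiplication by `a_{nn} = ∏_{i=1}^{n−1}(y_i − x_n)`:
`μ` is injective, `ker z = im μ`, `ker π = im z`, and `π` is surjective. -/
theorem four_term_complex_exact (n : ℕ) (hn : 2 ≤ n)
    (π : (PP n ⧸ Ik n n) →ₗ[PP n] (PP n ⧸ Ik n (n - 1)))
    (hπ : ∀ p : PP n, π (Ideal.Quotient.mk (Ik n n) p) = Ideal.Quotient.mk (Ik n (n - 1)) p)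
    (μ : (PP n ⧸ Ik n (n - 1)) →ₗ[PP n] (PP n ⧸ Ik n n))
    (hμ : ∀ p : PP n, μ (Ideal.Quotient.mk (Ik n (n - 1)) p) =
      Ideal.Quotient.mk (Ik n n) ((∏ i ∈ Finset.Icc 1 (n - 1), (yv n i - xv n n)) * p)) :
    Function.Injective μ ∧
    (∀ b : PP n ⧸ Ik n n,
      Ideal.Quotient.mk (Ik n n) (yv n n - xv n n) * b = 0 ↔ ∃ c, μ c = b) ∧
    (∀ b : PP n ⧸ Ik n n,
      π b = 0 ↔ ∃ c, Ideal.Quotient.mk (Ik n n) (yv n n - xv n n) * c = b) ∧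
    Function.Surjective π := by
  obtain ⟨k, rfl⟩ : ∃ k, n = k + 1 := ⟨n - 1, by omega⟩
  have hz : yv (k + 1) (k + 1) - xv (k + 1) (k + 1) = zz k := by
    simp only [yv, xv, zz, dif_pos (Nat.succ_pos k)]
    congr 3 <;> ext <;> simp
  have ha : ∏ i ∈ Finset.Icc 1 (k + 1 - 1), (yv (k + 1) i - xv (k + 1) (k + 1)) = aa k := by
    have h1 : Finset.Icc 1 (k + 1 - 1) = (Finset.range k).image (· + 1) := by
      ext i
      simp only [Finset.mem_Icc, Finset.mem_image, Finset.mem_range]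
      exact ⟨fun h => ⟨i - 1, by omega, by omega⟩, by rintro ⟨j, hj, rfl⟩; omega⟩
    rw [h1, Finset.prod_image (by simp), Finset.prod_range, aa]
    refine Finset.prod_congr rfl fun i _ => ?_
    simp only [yv, xv, dif_pos (Nat.succ_pos k)]
    congr 3 <;> ext <;> simp [Nat.mod_eq_of_lt, i.2.trans (Nat.lt_succ_self k)]
  rw [hz]
  simp only [ha] at hμ
  refine ⟨?_, ?_, ?_, ?_⟩
  · rw [injective_iff_map_eq_zero]
    intro b hb
    obtain ⟨p, rfl⟩ := Ideal.Quotient.mk_surjective b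
    rw [hμ, Ideal.Quotient.eq_zero_iff_mem] at hb
    exact Ideal.Quotient.eq_zero_iff_mem.mpr (mem_of_aa_mul_mem k p hb)
  · intro b
    obtain ⟨p, rfl⟩ := Ideal.Quotient.mk_surjective b
    rw [← map_mul, Ideal.Quotient.eq_zero_iff_mem, zz_mul_mem_iff,
      Ideal.Quotient.mk_surjective.exists]
    simp only [hμ, Ideal.Quotient.eq]
  · intro b
    obtain ⟨p, rfl⟩ := Ideal.Quotient.mk_surjective b
    rw [hπ, Ideal.Quotient.eq_zero_iff_mem, Nat.add_sub_cancel, mem_Ik_pred_iff',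
      Ideal.Quotient.mk_surjective.exists]
    simp only [← map_mul, Ideal.Quotient.eq]
  · intro b
    obtain ⟨p, rfl⟩ := Ideal.Quotient.mk_surjective b
    exact ⟨_, hπ p⟩

end
end

section
/- Let n ≥ 2 and R = ℚ[x_1,…,x_n]. The invariant subalgebra R^{S_{n−1}} (polynomials invariant under all permutations of x_1,…,x_{n−1}) is a free module over the subalgebra R^{S_n} of symmetric polynomials, with basis {1, x_n, x_n^2, …, x_n^{n−1}}. In particular every f ∈ R^{S_{n−1}} is uniquely expressible as ∑_{k=0}^{n−1} c_k·x_n^k with c_0,…,c_{n−1} symmetric polynomials. -/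
/-!
Write `n = m + 1`, so that `x_n` is `X (Fin.last m)`.

*Independence.* If `∑ c_k x_n^k = 0` with symmetric `c_k`, then transposing `x_n` and `x_i` gives
`∑ c_k x_i^k = 0` for every `i`, so `∑ c_k T^k` has degree less than `n` and `n` distinct roots in
the domain `R` (`coeff_eq_zero_of_sum_eq_zero`).

*Generation.* Expand `f ∈ R^{S_{n-1}}` in powers of `x_n` and average over `S_{n-1}`: this expresses
`f` through powers of `x_n` with coefficients symmetric in `x_1,…,x_{n-1}`
(`mem_symAdjoin_of_mem`). By the fundamental theorem these coefficients are polynomials in the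
`e_k(x_1,…,x_{n-1})` (`rename_symm_mem`), and
`e_{k+1}(x_1,…,x_{n-1}) = e_{k+1}(x_1,…,x_n) - x_n e_k(x_1,…,x_{n-1})` puts the latter in
`R^{S_n}[x_n]` (`rename_esymm_mem`). Since `x_n` is a root of the monic polynomial `∏ (T - x_i)` of
degree `n` over `R^{S_n}` (`exists_monic`), the powers `x_n^k` with `k < n` span `R^{S_n}[x_n]`.
-/

open MvPolynomial

set_option synthInstance.maxHeartbeats 1000000
set_option maxHeartbeats 1600000

noncomputable section

/-- The polynomial ring `R = ℚ[x_1,…,x_n]`. -/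
abbrev Rr (n : ℕ) := MvPolynomial (Fin n) ℚ

/-- The subalgebra `R^{S_k}` of polynomials invariant under all permutations of the
variables `x_1,…,x_k` which fix the remaining variables (0-indexed: permutations `g` of
`Fin n` with `g i = i` whenever `k ≤ i`). -/
def invar (n k : ℕ) : Subalgebra ℚ (Rr n) :=
  ⨅ g ∈ {g : Equiv.Perm (Fin n) | ∀ i : Fin n, k ≤ (i : ℕ) → g i = i},
    AlgHom.equalizer (rename (g : Fin n → Fin n)) (AlgHom.id ℚ (Rr n))

/-- `R^W = R^{S_n}`, the symmetric polynomials. -/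
abbrev RWa (n : ℕ) : Subalgebra ℚ (Rr n) := invar n n

/-- `R^I = R^{S_{n−1}}`. -/
abbrev RIa (n : ℕ) : Subalgebra ℚ (Rr n) := invar n (n - 1)

lemma invar_antitone (n : ℕ) {k l : ℕ} (h : k ≤ l) : invar n l ≤ invar n k := by
  refine le_iInf₂ fun g hg => ?_
  exact iInf₂_le g (fun i hi => hg i (h.trans hi))

/-- `R^{S_n} ⊆ R^{S_{n−1}}`. -/
lemma RW_le_RI (n : ℕ) : RWa n ≤ RIa n := invar_antitone n (Nat.sub_le n 1)

/-- `R^{S_{n−1}}` as an algebra (in particular, a module) over `R^{S_n}`. -/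
instance algebraRWRI (n : ℕ) : Algebra (RWa n) (RIa n) :=
  ((Subalgebra.inclusion (RW_le_RI n)).toRingHom).toAlgebra

/-- The variable `x_n` (the last one), as an element of `R`. -/
def xnn (n : ℕ) : Rr n :=
  if h : 0 < n then X (⟨(n - 1) % n, Nat.mod_lt _ h⟩ : Fin n) else 0

lemma mem_invar_iff (n k : ℕ) (x : Rr n) :
    x ∈ invar n k ↔ ∀ g : Equiv.Perm (Fin n),
      (∀ i : Fin n, k ≤ (i : ℕ) → g i = i) → rename (g : Fin n → Fin n) x = x := by
  simp [invar, Algebra.mem_iInf, AlgHom.mem_equalizer]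

lemma xnn_mem_RI (n : ℕ) : xnn n ∈ RIa n := by
  rw [mem_invar_iff]
  intro g hg
  unfold xnn
  split_ifs with h
  · rw [rename_X, hg]
    have : (n - 1) % n = n - 1 := Nat.mod_eq_of_lt (by omega)
    simp [this]
  · simp

/-- The element `x_n^k` of `R^{S_{n−1}}`. -/
def xnpow (n k : ℕ) : RIa n := ⟨xnn n ^ k, pow_mem (xnn_mem_RI n) k⟩

/-- `e_m(x_1,…,x_{n−1})`, as an element of `R = ℚ[x_1,…,x_n]`. -/
def esymmFirst (n m : ℕ) : Rr n :=
  rename (Fin.castLE (Nat.sub_le n 1)) (esymm (Fin (n - 1)) ℚ m)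

lemma esymmFirst_mem_RI (n m : ℕ) : esymmFirst n m ∈ RIa n := by
  rw [mem_invar_iff]
  intro g hg
  unfold esymmFirst
  have key : ∀ i : Fin n, (i : ℕ) < n - 1 → ((g i : Fin n) : ℕ) < n - 1 := by
    intro i hi
    by_contra hcon
    push_neg at hcon
    have h1 : g (g i) = g i := hg (g i) hcon
    have h2 : g i = i := g.injective h1
    rw [h2] at hcon; omega
  let g' : Fin (n - 1) → Fin (n - 1) := fun i =>
    ⟨((g (Fin.castLE (Nat.sub_le n 1) i) : Fin n) : ℕ), key _ (by simp)⟩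
  have hinj : Function.Injective g' := by
    intro a b hab
    apply Fin.castLE_injective (Nat.sub_le n 1)
    apply g.injective
    apply Fin.ext
    simpa [g', Fin.ext_iff] using hab
  let e : Equiv.Perm (Fin (n - 1)) :=
    Equiv.ofBijective g' (Finite.injective_iff_bijective.mp hinj)
  have hcomp : (g : Fin n → Fin n) ∘ Fin.castLE (Nat.sub_le n 1) =
      Fin.castLE (Nat.sub_le n 1) ∘ (e : Fin (n - 1) → Fin (n - 1)) := by
    funext i
    exact (Fin.ext rfl : Fin.castLE (Nat.sub_le n 1) (e i) = g (Fin.castLE (Nat.sub_le n 1) i)).symm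
  calc (rename (g : Fin n → Fin n))
        ((rename (Fin.castLE (Nat.sub_le n 1))) (esymm (Fin (n - 1)) ℚ m))
      = rename ((g : Fin n → Fin n) ∘ Fin.castLE (Nat.sub_le n 1))
          (esymm (Fin (n - 1)) ℚ m) := rename_rename _ _ _
    _ = rename (Fin.castLE (Nat.sub_le n 1) ∘ (e : Fin (n - 1) → Fin (n - 1)))
          (esymm (Fin (n - 1)) ℚ m) := by rw [hcomp]
    _ = rename (Fin.castLE (Nat.sub_le n 1))
          (rename (e : Fin (n - 1) → Fin (n - 1)) (esymm (Fin (n - 1)) ℚ m)) :=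
        (rename_rename _ _ _).symm
    _ = rename (Fin.castLE (Nat.sub_le n 1)) (esymm (Fin (n - 1)) ℚ m) := by
        rw [rename_esymm]

/-- `e_m(x_1,…,x_{n−1})` as an element of `R^{S_{n−1}}`. -/
def eI (n m : ℕ) : RIa n := ⟨esymmFirst n m, esymmFirst_mem_RI n m⟩

/-! ### Independence -/

lemma xnn_succ (m : ℕ) : xnn (m + 1) = X (Fin.last m) := by
  unfold xnn
  rw [dif_pos (Nat.succ_pos m)]
  congr 1
  apply Fin.ext
  simp

/-- Applying the transposition of `x_n` and `x_i` turns a relation at `x_n` into the same relation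
at `x_i`. A polynomial of degree `< n` over the domain `R` with the `n` distinct roots
`x_1, …, x_n` is zero. -/
lemma coeff_eq_zero_of_sum_eq_zero (m : ℕ) (c : Fin (m + 1) → RWa (m + 1))
    (h : ∑ k : Fin (m + 1), (c k : Rr (m + 1)) * X (Fin.last m) ^ (k : ℕ) = 0) (k : Fin (m + 1)) :
    c k = 0 := by
  classical
  let P : Polynomial (Rr (m + 1)) :=
    ∑ k : Fin (m + 1), Polynomial.monomial (k : ℕ) (c k : Rr (m + 1))
  have hP : P = 0 := by
    refine Polynomial.eq_zero_of_natDegree_lt_card_of_eval_eq_zero P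
      (f := fun i : Fin (m + 1) => (X i : Rr (m + 1))) (X_injective) ?_ ?_
    · intro i
      have h2 := congrArg (rename (Equiv.swap (Fin.last m) i : Fin (m + 1) → Fin (m + 1))) h
      have hc : ∀ k, rename (Equiv.swap (Fin.last m) i : Fin (m + 1) → Fin (m + 1))
          (c k : Rr (m + 1)) = c k := fun k =>
        (mem_invar_iff _ _ _).1 (c k).2 _ (fun j hj => absurd j.2 (by omega))
      simp only [map_sum, map_mul, map_pow, rename_X, Equiv.swap_apply_left, hc, map_zero] at h2
      simpa [P, Polynomial.eval_finsetSum] using h2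
    · rw [Fintype.card_fin]
      refine Nat.lt_succ_of_le (Polynomial.natDegree_sum_le_of_forall_le _ _ ?_)
      intro k _
      exact (Polynomial.natDegree_monomial_le _).trans (Nat.le_of_lt_succ k.2)
  have hk := congrArg (fun p => Polynomial.coeff p (k : ℕ)) hP
  have : (c k : Rr (m + 1)) = 0 := by
    simpa [P, Polynomial.finsetSum_coeff, Polynomial.coeff_monomial, Fin.val_inj] using hk
  exact Subtype.ext this

/-! ### Generation -/

/-- The subalgebra `R^{S_n}[x_n]` of `R`, for `n = m + 1`. -/
abbrev symAdjoin (m : ℕ) : Subalgebra (RWa (m + 1)) (Rr (m + 1)) :=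
  Algebra.adjoin (RWa (m + 1)) {X (Fin.last m)}

lemma mem_symAdjoin_of_symm (m : ℕ) {f : Rr (m + 1)} (hf : f ∈ RWa (m + 1)) :
    f ∈ symAdjoin m :=
  (symAdjoin m).algebraMap_mem ⟨f, hf⟩

lemma X_last_mem_symAdjoin (m : ℕ) : (X (Fin.last m) : Rr (m + 1)) ∈ symAdjoin m :=
  Algebra.subset_adjoin rfl

/-- `∏ (T - x_i)` is a monic polynomial of degree `n` with symmetric coefficients and root `x_n`. -/
lemma exists_monic (m : ℕ) : ∃ q : Polynomial (RWa (m + 1)),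
    q.Monic ∧ q.natDegree = m + 1 ∧ Polynomial.aeval (X (Fin.last m) : Rr (m + 1)) q = 0 := by
  let p : Polynomial (Rr (m + 1)) :=
    ∏ i : Fin (m + 1), (Polynomial.X - Polynomial.C (X i))
  have hp : p.Monic := Polynomial.monic_prod_of_monic _ _ fun i _ => Polynomial.monic_X_sub_C _
  have hl : p ∈ Polynomial.lifts (algebraMap (RWa (m + 1)) (Rr (m + 1))) := by
    rw [Polynomial.lifts_iff_coeff_lifts]
    intro k
    refine ⟨⟨p.coeff k, ?_⟩, rfl⟩
    rw [mem_invar_iff]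
    intro g _
    have hg : p.map (rename (g : Fin (m + 1) → Fin (m + 1)) :
        Rr (m + 1) →ₐ[ℚ] Rr (m + 1)).toRingHom = p := by
      simp only [p, Polynomial.map_prod, Polynomial.map_sub, Polynomial.map_X, Polynomial.map_C]
      simp only [AlgHom.toRingHom_eq_coe, RingHom.coe_coe, rename_X]
      exact Equiv.prod_comp g
        (fun i => (Polynomial.X - Polynomial.C (X i) : Polynomial (Rr (m + 1))))
    have := congrArg (fun r => Polynomial.coeff r k) hg
    simpa [Polynomial.coeff_map] using this
  obtain ⟨q, hq, hdeg, hmon⟩ := Polynomial.lifts_and_natDegree_eq_and_monic hl hp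
  refine ⟨q, hmon, ?_, ?_⟩
  · rw [hdeg]
    simp [p]
  · rw [Polynomial.aeval_def, ← Polynomial.eval_map, hq]
    simp only [p, Polynomial.eval_prod]
    exact Finset.prod_eq_zero (Finset.mem_univ (Fin.last m)) (by simp)

lemma esymm_succ_eq (m k : ℕ) :
    esymm (Fin (m + 1)) ℚ (k + 1) = rename Fin.castSucc (esymm (Fin m) ℚ (k + 1)) +
      X (Fin.last m) * rename Fin.castSucc (esymm (Fin m) ℚ k) := by
  have hr : ∀ j, rename Fin.castSucc (esymm (Fin m) ℚ j) =
      ((Finset.univ : Finset (Fin m)).val.map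
        (fun i => (X i.castSucc : Rr (m + 1)))).esymm j := by
    intro j
    have h : (rename Fin.castSucc : MvPolynomial (Fin m) ℚ →ₐ[ℚ] Rr (m + 1)) =
        aeval fun i => X i.castSucc := by
      ext i
      simp
    rw [← aeval_esymm_eq_multiset_esymm (Fin m) ℚ, h]
  have hu : (Finset.univ : Finset (Fin (m + 1))).val.map (X : Fin (m + 1) → Rr (m + 1)) =
      X (Fin.last m) ::ₘ (Finset.univ : Finset (Fin m)).val.map
        (fun i => (X i.castSucc : Rr (m + 1))) := by
    rw [Fin.univ_castSuccEmb]
    simp [Function.comp_def]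
  rw [hr, hr, esymm_eq_multiset_esymm, hu]
  simp only [Multiset.esymm, Multiset.powersetCard_cons, Multiset.map_add, Multiset.sum_add,
    Multiset.map_map, Function.comp_def, Multiset.prod_cons, Multiset.sum_map_mul_left]

/-- By the recursion `e_{k+1}(x_1,…,x_{n-1}) = e_{k+1}(x_1,…,x_n) - x_n e_k(x_1,…,x_{n-1})`. -/
lemma rename_esymm_mem (m k : ℕ) :
    rename Fin.castSucc (esymm (Fin m) ℚ k) ∈ symAdjoin m := by
  induction k with
  | zero => simp
  | succ k ih =>
    rw [← sub_eq_of_eq_add (esymm_succ_eq m k)]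
    refine sub_mem (mem_symAdjoin_of_symm m ?_) (mul_mem (X_last_mem_symAdjoin m) ih)
    rw [mem_invar_iff]
    intro g _
    exact rename_esymm _ _ _ g

/-- By the fundamental theorem on symmetric polynomials in `x_1,…,x_{n-1}`. -/
lemma rename_symm_mem (m : ℕ) (p : MvPolynomial (Fin m) ℚ) (hp : p.IsSymmetric) :
    rename Fin.castSucc p ∈ symAdjoin m := by
  obtain ⟨q, hq⟩ := esymmAlgHom_fin_surjective ℚ (le_refl m) ⟨p, hp⟩
  have hq' : aeval (fun i : Fin m => esymm (Fin m) ℚ (i + 1)) q = p := by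
    rw [← esymmAlgHom_apply, hq]
  rw [← hq']
  clear hq hq'
  induction q using MvPolynomial.induction_on with
  | C r =>
    refine mem_symAdjoin_of_symm m ?_
    simp only [aeval_C, AlgHom.commutes]
    exact (RWa (m + 1)).algebraMap_mem r
  | add p q hp hq => simpa using add_mem hp hq
  | mul_X p i hp => simpa using mul_mem hp (rename_esymm_mem m _)

/-- Every polynomial is a polynomial in `x_n` with coefficients in `ℚ[x_1,…,x_{n-1}]`. -/
lemma exists_eval₂_eq (m : ℕ) (f : Rr (m + 1)) : ∃ P : Polynomial (MvPolynomial (Fin m) ℚ),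
    P.eval₂ (rename Fin.castSucc : MvPolynomial (Fin m) ℚ →ₐ[ℚ] Rr (m + 1)).toRingHom
      (X (Fin.last m)) = f := by
  induction f using MvPolynomial.induction_on with
  | C r => exact ⟨Polynomial.C (C r), by simp⟩
  | add p q hp hq =>
    obtain ⟨P, rfl⟩ := hp
    obtain ⟨Q, rfl⟩ := hq
    exact ⟨P + Q, Polynomial.eval₂_add _ _⟩
  | mul_X p i hp =>
    obtain ⟨P, rfl⟩ := hp
    induction i using Fin.lastCases with
    | last => exact ⟨P * Polynomial.X, by simp [Polynomial.eval₂_mul]⟩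
    | cast i => exact ⟨P * Polynomial.C (X i), by simp [Polynomial.eval₂_mul]⟩

/-- The Reynolds operator fixes `f` and acts coefficientwise on its expansion in powers of `x_n`;
this makes the coefficients symmetric in `x_1,…,x_{n-1}`. -/
lemma mem_symAdjoin_of_mem (m : ℕ) (f : Rr (m + 1)) (hf : f ∈ RIa (m + 1)) :
    f ∈ symAdjoin m := by
  obtain ⟨P, hP⟩ := exists_eval₂_eq m f
  let ext (g : Equiv.Perm (Fin m)) : Equiv.Perm (Fin (m + 1)) :=
    g.viaFintypeEmbedding Fin.castSuccEmb
  have ext_cast (g : Equiv.Perm (Fin m)) (i : Fin m) : ext g i.castSucc = (g i).castSucc :=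
    g.viaFintypeEmbedding_apply_image Fin.castSuccEmb i
  have ext_last (g : Equiv.Perm (Fin m)) : ext g (Fin.last m) = Fin.last m :=
    g.viaFintypeEmbedding_apply_notMem_range _ (by
      rintro ⟨i, hi⟩
      exact (Fin.castSucc_lt_last i).ne hi)
  have hfix (g : Equiv.Perm (Fin m)) : rename (ext g : Fin (m + 1) → Fin (m + 1)) f = f := by
    refine (mem_invar_iff _ _ _).1 hf _ fun i hi => ?_
    obtain rfl : i = Fin.last m := Fin.ext (by simp at hi ⊢; omega)
    exact ext_last g
  have hsum : ∑ g : Equiv.Perm (Fin m), rename (ext g : Fin (m + 1) → Fin (m + 1)) f =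
      ∑ k ∈ Finset.range (P.natDegree + 1),
        rename Fin.castSucc (∑ g : Equiv.Perm (Fin m), rename g (P.coeff k)) *
          X (Fin.last m) ^ k := by
    conv_lhs => rw [← hP]
    simp only [Polynomial.eval₂_eq_sum_range, map_sum, map_mul, map_pow, rename_X, ext_last,
      Finset.sum_mul]
    rw [Finset.sum_comm]
    refine Finset.sum_congr rfl fun k _ => Finset.sum_congr rfl fun g _ => ?_
    congr 1
    simp only [AlgHom.toRingHom_eq_coe, RingHom.coe_coe, rename_rename]
    congr 2
    funext i
    exact ext_cast g i
  have hmem : ∑ g : Equiv.Perm (Fin m), rename (ext g : Fin (m + 1) → Fin (m + 1)) f ∈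
      symAdjoin m := by
    rw [hsum]
    refine sum_mem fun k _ => mul_mem (rename_symm_mem m _ ?_)
      (pow_mem (X_last_mem_symAdjoin m) k)
    intro h
    rw [map_sum]
    simp only [rename_rename]
    exact Equiv.sum_comp (Equiv.mulLeft h)
      (fun g : Equiv.Perm (Fin m) => rename (g : Fin m → Fin m) (P.coeff k))
  simp only [hfix, Finset.sum_const, Finset.card_univ] at hmem
  -- Division by the order of the group uses that the ground field is `ℚ`.
  have hN : (Fintype.card (Equiv.Perm (Fin m)) : ℚ) ≠ 0 :=
    Nat.cast_ne_zero.2 Fintype.card_ne_zero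
  have hinv : (C (Fintype.card (Equiv.Perm (Fin m)) : ℚ)⁻¹ : Rr (m + 1)) ∈ symAdjoin m :=
    mem_symAdjoin_of_symm m ((RWa (m + 1)).algebraMap_mem _)
  have := mul_mem hinv hmem
  rwa [nsmul_eq_mul, ← mul_assoc, ← map_natCast (C : ℚ →+* Rr (m + 1)), ← C_mul,
    inv_mul_cancel₀ hN, C_1, one_mul] at this

lemma exists_coeff (m : ℕ) (f : Rr (m + 1)) (hf : f ∈ RIa (m + 1)) :
    ∃ c : Fin (m + 1) → RWa (m + 1),
      f = ∑ k : Fin (m + 1), (c k : Rr (m + 1)) * X (Fin.last m) ^ (k : ℕ) := by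
  obtain ⟨q, hq, hdeg, hroot⟩ := exists_monic m
  have h : f ∈ Subalgebra.toSubmodule (symAdjoin m) := mem_symAdjoin_of_mem m f hf
  rw [← Submodule.span_range_natDegree_eq_adjoin hq hroot, hdeg] at h
  replace h := Submodule.span_mono (t := Set.range fun k : Fin (m + 1) =>
      (X (Fin.last m) : Rr (m + 1)) ^ (k : ℕ)) (by
    intro y hy
    simp only [Finset.coe_image, Finset.coe_range, Set.mem_image, Set.mem_Iio] at hy
    obtain ⟨k, hk, rfl⟩ := hy
    exact ⟨⟨k, hk⟩, rfl⟩) h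
  rw [Submodule.mem_span_range_iff_exists_fun] at h
  obtain ⟨c, hc⟩ := h
  exact ⟨c, hc.symm⟩

/-- Translation between the module structure on `R^{S_{n-1}}` and products in `R`. -/
lemma coe_sum_smul_xnpow (m : ℕ) (c : Fin (m + 1) → RWa (m + 1)) :
    ((∑ k : Fin (m + 1), c k • xnpow (m + 1) (k : ℕ) : RIa (m + 1)) : Rr (m + 1)) =
      ∑ k : Fin (m + 1), (c k : Rr (m + 1)) * X (Fin.last m) ^ (k : ℕ) := by
  rw [AddSubmonoidClass.coe_finsetSum]
  refine Finset.sum_congr rfl fun k _ => ?_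
  rw [← xnn_succ, Algebra.smul_def]
  rfl

/-- Theorem `thm-frobBases`, freeness part: `R^{S_{n−1}}` is a free
`R^{S_n}`-module with basis `{1, x_n, …, x_n^{n−1}}`; in particular every `f ∈ R^{S_{n−1}}`
is uniquely expressible as `∑_{k=0}^{n−1} c_k·x_n^k` with the `c_k` symmetric. -/
theorem RI_free_over_RW (n : ℕ) (hn : 2 ≤ n) :
    LinearIndependent (RWa n) (fun k : Fin n => xnpow n (k : ℕ)) ∧
    Submodule.span (RWa n) (Set.range fun k : Fin n => xnpow n (k : ℕ)) = ⊤ ∧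
    ∀ f : RIa n, ∃! c : Fin n → RWa n, f = ∑ k : Fin n, c k • xnpow n (k : ℕ) := by
  obtain ⟨m, rfl⟩ : ∃ m, n = m + 1 := ⟨n - 1, by omega⟩
  have hli : LinearIndependent (RWa (m + 1)) (fun k : Fin (m + 1) => xnpow (m + 1) (k : ℕ)) := by
    rw [Fintype.linearIndependent_iff]
    intro c hc
    refine coeff_eq_zero_of_sum_eq_zero m c ?_
    rw [← coe_sum_smul_xnpow, hc]
    rfl
  have hex : ∀ f : RIa (m + 1), ∃ c : Fin (m + 1) → RWa (m + 1),
      f = ∑ k : Fin (m + 1), c k • xnpow (m + 1) (k : ℕ) := by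
    intro f
    obtain ⟨c, hc⟩ := exists_coeff m f f.2
    exact ⟨c, Subtype.ext (hc.trans (coe_sum_smul_xnpow m c).symm)⟩
  refine ⟨hli, ?_, fun f => ?_⟩
  · rw [eq_top_iff]
    intro f _
    obtain ⟨c, hc⟩ := hex f
    exact Submodule.mem_span_range_iff_exists_fun _ |>.2 ⟨c, hc.symm⟩
  · obtain ⟨c, hc⟩ := hex f
    refine ⟨c, hc, fun d hd => ?_⟩
    exact hli.fintypeLinearCombination_injective (by
      simp only [Fintype.linearCombination_apply]
      rw [← hc, ← hd])

end
end

section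
/- Let n ≥ 2 and R = ℚ[x_1,…,x_n]. Since R^{S_{n−1}} is free over R^{S_n} with basis {x_n^k}_{k=0}^{n−1}, let ∂ : R^{S_{n−1}} → R^{S_n} be the unique R^{S_n}-linear map with ∂(x_n^k) = 0 for 0 ≤ k ≤ n−2 and ∂(x_n^{n−1}) = (−1)^{n−1}. Then the families {(−1)^k x_n^k}_{k=0}^{n−1} and {e_{n−1−l}(x_1,…,x_{n−1})}_{l=0}^{n−1} are dual bases with respect to ∂: for all 0 ≤ k, l ≤ n−1, one has ∂((−x_n)^k · e_{n−1−l}(x_1,…,x_{n−1})) = 1 if k = l and 0 otherwise. -/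
/-!
Write `y = x_n`, `e'_m = e_m(x_1,…,x_{n-1})` and `E_m = e_m(x_1,…,x_n)`. Splitting the subsets
indexing `E_{m+1}` according to whether they contain `n` gives `E_{m+1} = e'_{m+1} + y e'_m`
(`esymm_fin_succ_last`). As `E_{m+1}` is symmetric, multiplying by `(-y)^k` and applying the
`R^{S_n}`-linear `∂` yields
`∂((-y)^{k+1} e'_m) = ∂((-y)^k e'_{m+1}) - E_{m+1} ∂((-y)^k)`,
whose last term vanishes for `k < n-1`. So `∂((-y)^k e'_m)`, for `k ≤ n-1`, depends only on
`k + m`. If `k + m ≤ n-1`, trading `e'_{k+m}` for `(-y)^{k+m}` shows that it equals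
`∂((-y)^{k+m})`, which is `1` if `k + m = n-1` and `0` otherwise; if `k + m ≥ n`, it is
`∂(e'_{k+m}) = 0`.
-/

open MvPolynomial

set_option synthInstance.maxHeartbeats 1000000
set_option maxHeartbeats 1600000

noncomputable section

/-- Pascal-type recursion: a subset of the variables either omits or contains the last one. -/
lemma esymm_fin_succ_last (N m : ℕ) :
    esymm (Fin (N + 1)) ℚ (m + 1) =
      rename Fin.castSucc (esymm (Fin N) ℚ (m + 1)) +
        X (Fin.last N) * rename Fin.castSucc (esymm (Fin N) ℚ m) := by
  have hren : ∀ j, rename (Fin.castSucc : Fin N → Fin (N + 1)) (esymm (Fin N) ℚ j) =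
      ((Finset.univ : Finset (Fin N)).val.map
        (fun i => (X i.castSucc : MvPolynomial (Fin (N + 1)) ℚ))).esymm j := by
    intro j
    rw [aeval_unique (rename (Fin.castSucc : Fin N → Fin (N + 1))),
      aeval_esymm_eq_multiset_esymm]
    simp only [Function.comp_def, rename_X]
  have huniv : (Finset.univ : Finset (Fin (N + 1))).val.map
      (X : Fin (N + 1) → MvPolynomial (Fin (N + 1)) ℚ) =
      X (Fin.last N) ::ₘ (Finset.univ : Finset (Fin N)).val.map (fun i => X i.castSucc) := by
    rw [Fin.univ_castSuccEmb]
    simp [Finset.map_val, Multiset.map_map, -Fin.univ_val_map]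
  rw [esymm_eq_multiset_esymm, huniv, hren, hren]
  simp only [Multiset.esymm, Multiset.powersetCard_cons, Multiset.map_add, Multiset.sum_add,
    Multiset.map_map, Function.comp_def, Multiset.prod_cons, Multiset.sum_map_mul_left]

/-- `e_m(x_1,…,x_n)`, as an element of `R^{S_n}`. -/
def eW (n m : ℕ) : RWa n :=
  ⟨esymm (Fin n) ℚ m, (mem_invar_iff n n _).2 fun g _ => rename_esymm (Fin n) ℚ m g⟩

lemma algebraMap_eW (n m : ℕ) (hn : 2 ≤ n) :
    algebraMap (RWa n) (RIa n) (eW n (m + 1)) = eI n (m + 1) + xnpow n 1 * eI n m := by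
  obtain ⟨N, rfl⟩ : ∃ N, n = N + 1 := ⟨n - 1, by omega⟩
  have hx : xnn (N + 1) = X (Fin.last N) := by
    unfold xnn
    rw [dif_pos (Nat.succ_pos N)]
    congr 1
    ext
    simp
  apply Subtype.ext
  change esymm (Fin (N + 1)) ℚ (m + 1) =
    esymmFirst (N + 1) (m + 1) + xnn (N + 1) ^ 1 * esymmFirst (N + 1) m
  rw [hx, pow_one]
  exact esymm_fin_succ_last N m

lemma eI_zero (n : ℕ) : eI n 0 = 1 :=
  Subtype.ext (by simp [eI, esymmFirst])

lemma eI_eq_zero (n m : ℕ) (hn : 2 ≤ n) (hm : n ≤ m) : eI n m = 0 := by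
  apply Subtype.ext
  have : Finset.powersetCard m (Finset.univ : Finset (Fin (n - 1))) = ∅ :=
    Finset.powersetCard_eq_empty.2 (by simp; omega)
  simp [eI, esymmFirst, esymm, this]

/-- The duality argument in an arbitrary algebra `B` over `A`, where `y` and `e` stand for `x_n` and
`e_m(x_1,…,x_{n-1})`, and `E m` for `e_{m+1}(x_1,…,x_n)`. -/
lemma dual_bases_of_recursion {A B : Type*} [CommRing A] [CommRing B] [Algebra A B]
    (par : B →ₗ[A] A) (N : ℕ) (y : B) (e : ℕ → B) (E : ℕ → A)
    (he0 : e 0 = 1) (he : ∀ m, N < m → e m = 0)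
    (hE : ∀ m, algebraMap A B (E m) = e (m + 1) + y * e m)
    (hpar0 : ∀ k, k < N → par (y ^ k) = 0) (hpar1 : par (y ^ N) = (-1) ^ N)
    (k l : ℕ) (hk : k ≤ N) (hl : l ≤ N) :
    par ((-y) ^ k * e (N - l)) = if k = l then 1 else 0 := by
  have hpow : ∀ k, k ≤ N → par ((-y) ^ k) = if k = N then 1 else 0 := by
    intro k hk
    have h : (-y) ^ k = ((-1) ^ k : A) • y ^ k := by
      rw [Algebra.smul_def, map_pow, map_neg, map_one, ← neg_pow]
    rw [h, map_smul, smul_eq_mul]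
    split_ifs with h
    · rw [h, hpar1, ← mul_pow, neg_one_mul, neg_neg, one_pow]
    · rw [hpar0 k (by omega), mul_zero]
  have hstep : ∀ k m, k < N → par ((-y) ^ (k + 1) * e m) = par ((-y) ^ k * e (m + 1)) := by
    intro k m hk
    have h : (-y) ^ (k + 1) * e m = (-y) ^ k * e (m + 1) - E m • (-y) ^ k := by
      rw [Algebra.smul_def, hE]
      ring
    rw [h, map_sub, map_smul, hpow k hk.le, if_neg hk.ne, smul_zero, sub_zero]
  have hshift : ∀ k m, k ≤ N → par ((-y) ^ k * e m) = par (e (k + m)) := by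
    intro k
    induction k with
    | zero => intro m _; simp
    | succ k ih =>
      intro m hk
      rw [hstep k m (by omega), ih (m + 1) (by omega)]
      congr 2
      omega
  rw [hshift k _ hk]
  by_cases hs : k + (N - l) ≤ N
  · have h := hshift (k + (N - l)) 0 hs
    rw [he0, mul_one, hpow _ hs, add_zero] at h
    rw [← h]
    exact if_congr (by omega) rfl rfl
  · rw [he _ (by omega), map_zero, if_neg (by omega)]

/-- Theorem `thm-frobBases`, dual bases: let `∂ : R^{S_{n−1}} → R^{S_n}`
be the unique `R^{S_n}`-linear map with `∂(x_n^k) = 0` for `0 ≤ k ≤ n−2` and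
`∂(x_n^{n−1}) = (−1)^{n−1}` (such a map exists and is unique since `R^{S_{n−1}}` is free
over `R^{S_n}` with basis `{x_n^k}`).  Then `{(−1)^k x_n^k}` and
`{e_{n−1−l}(x_1,…,x_{n−1})}` are dual bases with respect to `∂`:
`∂((−x_n)^k · e_{n−1−l}) = δ_{kl}` for `0 ≤ k, l ≤ n−1`. -/
theorem frobenius_dual_bases (n : ℕ) (hn : 2 ≤ n)
    (par : RIa n →ₗ[RWa n] RWa n)
    (hpar0 : ∀ k : ℕ, k ≤ n - 2 → par (xnpow n k) = 0)
    (hpar1 : par (xnpow n (n - 1)) = (-1) ^ (n - 1)) :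
    ∀ k l : ℕ, k ≤ n - 1 → l ≤ n - 1 →
      par ((-(xnpow n 1)) ^ k * eI n (n - 1 - l)) = if k = l then 1 else 0 := by
  intro k l hk hl
  have hx : ∀ j, xnpow n 1 ^ j = xnpow n j := fun j => Subtype.ext (by simp [xnpow])
  exact dual_bases_of_recursion par (n - 1) (xnpow n 1) (eI n) (fun m => eW n (m + 1))
    (eI_zero n) (fun m hm => eI_eq_zero n m hn (by omega)) (fun m => algebraMap_eW n m hn)
    (fun j hj => by rw [hx]; exact hpar0 j (by omega)) (by rw [hx]; exact hpar1) k l hk hl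

end
end

section
/- Let n ≥ 1 and 1 ≤ k ≤ n. Consider the ℚ-algebra homomorphism Φ_k : P = ℚ[x_1,…,x_n,y_1,…,y_n] → R ⊗_{R^{S_k}} R determined by x_i ↦ x_i ⊗ 1 and y_i ↦ 1 ⊗ x_i for 1 ≤ i ≤ n. Then Φ_k is surjective and its kernel is exactly the ideal I_k. In particular, P/I_n ≅ R ⊗_{R^{S_n}} R and P/I_{n−1} ≅ R ⊗_{R^{S_{n−1}}} R as P-modules (equivalently, as (R,R)-bimodules). -/
/-!
Surjectivity is clear, since `p ⊗ q` is the image of `p(x) q(y)`. The generators of `I_k` are of the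
form `f(y) - f(x)` with `f` invariant under `S_k`, so they are killed by `Φ_k`.

For the other inclusion, the assignment `p ⊗ q ↦ p(x) q(y)` defines a map `R ⊗ R → P ⧸ I_k`
splitting `Φ_k` modulo `I_k`, provided it is balanced over `R^{S_k}`, i.e. provided `f(x) ≡ f(y)`
modulo `I_k` for every invariant `f` (`invar_le_congSub`). The polynomials `f` with this
property form a subalgebra `congSub n k` containing `x_{k+1},…,x_n` and the `e_m(x_1,…,x_n)` for
`m ≤ k`. The recursion `e_m(a, s) = e_m(s) + a e_{m-1}(s)` removes the last variables one at a time,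
so it also contains the `e_m(x_1,…,x_k)`. By the fundamental theorem on symmetric polynomials with
coefficients in `ℚ[x_{k+1},…,x_n]`, these elements generate `R^{S_k}`.

Everything works for `k = 0` too, which is needed for `I_{n-1}` when `n = 1`.
-/

open MvPolynomial

noncomputable section

set_option synthInstance.maxHeartbeats 1000000
set_option maxHeartbeats 1600000

open TensorProduct in
/-- The `ℚ`-algebra homomorphism `Φ_k : P → R ⊗_{R^{S_k}} R` with `x_i ↦ x_i ⊗ 1` and
`y_i ↦ 1 ⊗ x_i`. -/
def Phi (n k : ℕ) : PP n →ₐ[ℚ] ((Rr n) ⊗[invar n k] (Rr n)) :=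
  aeval (Sum.elim (fun i => (X i : Rr n) ⊗ₜ[invar n k] (1 : Rr n))
    (fun i => (1 : Rr n) ⊗ₜ[invar n k] (X i : Rr n)))

open TensorProduct in
/-- The `P`-module structure on `R ⊗_{R^{S_k}} R` induced by `Φ_k`; it is exactly the
`(R,R)`-bimodule structure (left multiplication on the first factor, right multiplication
on the second). -/
instance modPTk (n k : ℕ) : Module (PP n) ((Rr n) ⊗[invar n k] (Rr n)) :=
  ((Phi n k).toRingHom).toModule

/-! ### The subalgebra of polynomials with `f(x) ≡ f(y)` modulo `I_k` -/

/-- The congruence `f(x) ≡ f(y)` modulo `I_k` cuts out a subalgebra of `R`: the equalizer of the two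
maps `R → P ⧸ I_k` sending the variables to the `x`'s and to the `y`'s respectively. -/
def congSub (n k : ℕ) : Subalgebra ℚ (Rr n) :=
  AlgHom.equalizer ((Ideal.Quotient.mkₐ ℚ (Ik n k)).comp (rename Sum.inl))
    ((Ideal.Quotient.mkₐ ℚ (Ik n k)).comp (rename Sum.inr))

lemma mem_congSub {n k : ℕ} {f : Rr n} :
    f ∈ congSub n k ↔ rename Sum.inr f - rename Sum.inl f ∈ Ik n k := by
  rw [← Ideal.Quotient.eq]
  exact eq_comm

lemma mem_invar {n k : ℕ} {f : Rr n} :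
    f ∈ invar n k ↔
      ∀ g : Equiv.Perm (Fin n), (∀ i : Fin n, k ≤ (i : ℕ) → g i = i) → rename g f = f := by
  simp [invar, Algebra.mem_iInf, AlgHom.mem_equalizer]

lemma X_mem_congSub {n k : ℕ} {i : Fin n} (hi : k ≤ (i : ℕ)) : (X i : Rr n) ∈ congSub n k := by
  rw [mem_congSub, rename_X, rename_X]
  exact Ideal.subset_span (Or.inr ⟨i, hi, rfl⟩)

lemma esymm_mem_congSub {n k m : ℕ} (hm : m ≤ k) : esymm (Fin n) ℚ m ∈ congSub n k := by
  rcases Nat.eq_zero_or_pos m with rfl | h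
  · rw [esymm_zero]
    exact one_mem _
  · rw [mem_congSub]
    exact Ideal.subset_span (Or.inl ⟨m, ⟨h, hm⟩, rfl⟩)

lemma multiset_esymm_cons {S : Type*} [CommSemiring S] (a : S) (s : Multiset S) (m : ℕ) :
    (a ::ₘ s).esymm (m + 1) = s.esymm (m + 1) + a * s.esymm m := by
  simp [Multiset.esymm, Multiset.powersetCard_cons, Multiset.sum_map_mul_left]

/-- Variables lying in a subalgebra can be removed from elementary symmetric polynomials lying in
that subalgebra, by solving `e_m(a, s) = e_m(s) + a e_{m-1}(s)` recursively for `e_m(s)`. -/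
lemma esymm_mem_of_add {S : Type*} [CommRing S] [Algebra ℚ S] (A : Subalgebra ℚ S) (k : ℕ)
    (s t : Multiset S) (ht : ∀ a ∈ t, a ∈ A) (h : ∀ m ≤ k, (t + s).esymm m ∈ A) :
    ∀ m ≤ k, s.esymm m ∈ A := by
  induction t using Multiset.induction_on with
  | empty => simpa using h
  | cons a t ih =>
    refine ih (fun b hb => ht b (Multiset.mem_cons_of_mem hb)) fun m => ?_
    induction m with
    | zero => simp [Multiset.esymm, one_mem]
    | succ m ihm =>
      intro hm
      have h1 := h (m + 1) hm
      rw [Multiset.cons_add, multiset_esymm_cons] at h1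
      have h2 := A.sub_mem h1 (A.mul_mem (ht a (Multiset.mem_cons_self a t)) (ihm (by omega)))
      simpa using h2

/-! ### Generators of the invariants -/

/-- `R`, with its variables split into the first `k` and the last `l`, as a polynomial ring in the
first `k` variables over the polynomial ring in the last `l`. -/
def splitEquiv (k l : ℕ) :
    MvPolynomial (Fin k) (MvPolynomial (Fin l) ℚ) ≃ₐ[ℚ] Rr (k + l) :=
  (sumAlgEquiv ℚ (Fin k) (Fin l)).symm.trans (renameEquiv ℚ finSumFinEquiv)

lemma splitEquiv_X (k l : ℕ) (i : Fin k) :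
    splitEquiv k l (X i) = X (Fin.castAdd l i) := by
  have : (sumAlgEquiv ℚ (Fin k) (Fin l)).symm (X i) = X (Sum.inl i) := by
    rw [AlgEquiv.symm_apply_eq]; simp
  simp [splitEquiv, this]

lemma splitEquiv_C_X (k l : ℕ) (j : Fin l) :
    splitEquiv k l (C (X j)) = X (Fin.natAdd k j) := by
  have : (sumAlgEquiv ℚ (Fin k) (Fin l)).symm (C (X j)) = X (Sum.inr j) := by
    rw [AlgEquiv.symm_apply_eq]; simp
  simp [splitEquiv, this]

lemma splitEquiv_esymm (k l m : ℕ) :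
    splitEquiv k l (esymm (Fin k) _ m) =
      ((Finset.univ : Finset (Fin k)).val.map
        (fun i => (X (Fin.castAdd l i) : Rr (k + l)))).esymm m := by
  rw [Finset.esymm_map_val, esymm, map_sum]
  simp [map_prod, splitEquiv_X]

lemma univ_map_X (k l : ℕ) :
    (Finset.univ : Finset (Fin (k + l))).val.map (fun i => (X i : Rr (k + l))) =
      (Finset.univ : Finset (Fin l)).val.map (fun j => X (Fin.natAdd k j)) +
      (Finset.univ : Finset (Fin k)).val.map (fun i => X (Fin.castAdd l i)) := by
  rw [← Finset.map_univ_equiv finSumFinEquiv, ← Finset.univ_disjSum_univ]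
  refine Eq.trans ?_ (add_comm _ _)
  simp [Finset.disjSum, Multiset.disjSum, Function.comp_def]

lemma splitEquiv_esymm_mem (k l m : ℕ) (hm : m ≤ k) :
    splitEquiv k l (esymm (Fin k) _ m) ∈ congSub (k + l) k := by
  rw [splitEquiv_esymm]
  refine esymm_mem_of_add _ k _
    ((Finset.univ : Finset (Fin l)).val.map (fun j => X (Fin.natAdd k j))) ?_ ?_ m hm
  · intro a ha
    obtain ⟨j, -, rfl⟩ := Multiset.mem_map.1 ha
    exact X_mem_congSub (by simp)
  · intro m hm
    rw [← univ_map_X, ← esymm_eq_multiset_esymm]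
    exact esymm_mem_congSub hm

lemma splitEquiv_C_mem (k l : ℕ) (c : MvPolynomial (Fin l) ℚ) :
    splitEquiv k l (C c) ∈ congSub (k + l) k := by
  induction c using MvPolynomial.induction_on with
  | C a =>
    have : splitEquiv k l (C (C a)) = algebraMap ℚ _ a := (splitEquiv k l).commutes a
    rw [this]
    exact Subalgebra.algebraMap_mem _ _
  | add p q hp hq =>
    rw [map_add, map_add]
    exact add_mem hp hq
  | mul_X p j hp =>
    rw [map_mul, map_mul, splitEquiv_C_X]
    exact mul_mem hp (X_mem_congSub (by simp))

/-- Permuting the first `k` variables through `splitEquiv`: the permutation `σ` of `Fin k`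
corresponds to its extension to `Fin (k + l)` by the identity. -/
lemma splitEquiv_rename (k l : ℕ) (σ : Equiv.Perm (Fin k))
    (p : MvPolynomial (Fin k) (MvPolynomial (Fin l) ℚ)) :
    splitEquiv k l (rename σ p) =
      rename (finSumFinEquiv.permCongr (Equiv.sumCongr σ (Equiv.refl (Fin l))))
        (splitEquiv k l p) := by
  induction p using MvPolynomial.induction_on with
  | C c =>
    rw [rename_C]
    induction c using MvPolynomial.induction_on with
    | C a =>
      have : splitEquiv k l (C (C a)) = C a := (splitEquiv k l).commutes a
      rw [this, rename_C]
    | add p q hp hq => simp only [map_add]; rw [← hp, ← hq]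
    | mul_X p j hp =>
      simp only [map_mul]
      rw [← hp, splitEquiv_C_X, rename_X]
      simp [Equiv.permCongr_apply]
  | add p q hp hq => simp only [map_add, hp, hq]
  | mul_X p i hp =>
    simp only [map_mul, hp, rename_X, splitEquiv_X]
    simp [Equiv.permCongr_apply]

/-- By the fundamental theorem over the coefficient ring of the last variables, an `S_k`-invariant
is a polynomial in `x_{k+1},…,x_n` and the elementary symmetric polynomials of `x_1,…,x_k`. -/
lemma invar_le_congSub {n k : ℕ} (hkn : k ≤ n) : invar n k ≤ congSub n k := by
  obtain ⟨l, rfl⟩ := Nat.exists_eq_add_of_le hkn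
  intro f hf
  rw [mem_invar] at hf
  obtain ⟨g, rfl⟩ := (splitEquiv k l).surjective f
  have hg : g.IsSymmetric := by
    intro σ
    apply (splitEquiv k l).injective
    rw [splitEquiv_rename]
    apply hf
    intro i
    refine Fin.addCases (fun i hi => ?_) (fun j _ => ?_) i
    · simp only [Fin.val_castAdd] at hi
      omega
    · simp [Equiv.permCongr_apply]
  obtain ⟨q, hq⟩ := esymmAlgHom_surjective (σ := Fin k) (R := MvPolynomial (Fin l) ℚ) (n := k)
    (by simp) ⟨g, hg⟩
  have hq' : aeval (fun i : Fin k => esymm (Fin k) (MvPolynomial (Fin l) ℚ) (i + 1)) q = g := by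
    rw [← esymmAlgHom_apply, hq]
  rw [← hq']
  clear hq hq' hg hf
  induction q using MvPolynomial.induction_on with
  | C c =>
    rw [aeval_C]
    exact splitEquiv_C_mem k l c
  | add p q hp hq =>
    rw [map_add, map_add]
    exact add_mem hp hq
  | mul_X p i hp =>
    rw [map_mul, map_mul, aeval_X]
    exact mul_mem hp (splitEquiv_esymm_mem k l _ i.2)

section
open TensorProduct

/-! ### Kernel and image of `Φ_k` -/

lemma Phi_inl (n k : ℕ) (p : Rr n) : Phi n k (rename Sum.inl p) = p ⊗ₜ[invar n k] (1 : Rr n) := by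
  have : (Phi n k).comp (rename Sum.inl) =
      (Algebra.TensorProduct.includeLeft : Rr n →ₐ[ℚ] Rr n ⊗[invar n k] Rr n) := by
    ext i
    simp [Phi]
  exact DFunLike.congr_fun this p

lemma Phi_inr (n k : ℕ) (p : Rr n) : Phi n k (rename Sum.inr p) = (1 : Rr n) ⊗ₜ[invar n k] p := by
  have : (Phi n k).comp (rename Sum.inr) =
      (Algebra.TensorProduct.includeRight :
        Rr n →ₐ[invar n k] Rr n ⊗[invar n k] Rr n).restrictScalars ℚ := by
    ext i
    simp [Phi]
  exact DFunLike.congr_fun this p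

lemma Phi_surjective (n k : ℕ) : Function.Surjective (Phi n k) := by
  intro z
  induction z using TensorProduct.induction_on with
  | zero => exact ⟨0, map_zero _⟩
  | tmul p q =>
    refine ⟨rename Sum.inl p * rename Sum.inr q, ?_⟩
    rw [map_mul, Phi_inl, Phi_inr, Algebra.TensorProduct.tmul_mul_tmul, mul_one, one_mul]
  | add a b ha hb =>
    obtain ⟨a, rfl⟩ := ha
    obtain ⟨b, rfl⟩ := hb
    exact ⟨a + b, map_add _ _ _⟩

lemma Phi_inr_eq_inl {n k : ℕ} {f : Rr n} (hf : f ∈ invar n k) :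
    Phi n k (rename Sum.inr f) = Phi n k (rename Sum.inl f) := by
  rw [Phi_inl, Phi_inr]
  have := TensorProduct.smul_tmul (R := invar n k) (⟨f, hf⟩ : invar n k) (1 : Rr n) (1 : Rr n)
  simpa [Subalgebra.smul_def] using this.symm

lemma Ik_le_ker (n k : ℕ) : Ik n k ≤ RingHom.ker (Phi n k).toRingHom := by
  rw [Ik, Ideal.span_le]
  have key : ∀ f ∈ invar n k,
      rename Sum.inr f - rename Sum.inl f ∈ RingHom.ker (Phi n k).toRingHom := by
    intro f hf
    rw [RingHom.mem_ker]
    change Phi n k _ = 0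
    rw [map_sub, Phi_inr_eq_inl hf, sub_self]
  rintro _ (⟨m, -, rfl⟩ | ⟨i, hi, rfl⟩)
  · exact key _ (mem_invar.2 fun g _ => rename_esymm _ _ _ g)
  · have := key (X i) (mem_invar.2 fun g hg => by rw [rename_X, hg i hi])
    simpa using this

/-- Multiplication `p ⊗ q ↦ p(x) q(y)` is a well-defined map `R ⊗ R → P ⧸ I_k` as soon as `p(x)`
and `p(y)` agree modulo `I_k` for invariant `p`, and it inverts `Φ_k` modulo `I_k`. -/
lemma ker_le_Ik {n k : ℕ} (hkn : k ≤ n) : RingHom.ker (Phi n k).toRingHom ≤ Ik n k := by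
  let fx : Rr n →ₐ[ℚ] PP n ⧸ Ik n k := (Ideal.Quotient.mkₐ ℚ (Ik n k)).comp (rename Sum.inl)
  let fy : Rr n →ₐ[ℚ] PP n ⧸ Ik n k := (Ideal.Quotient.mkₐ ℚ (Ik n k)).comp (rename Sum.inr)
  let _ : Algebra (invar n k) (PP n ⧸ Ik n k) := (fx.comp (invar n k).val).toRingHom.toAlgebra
  let gx : Rr n →ₐ[invar n k] PP n ⧸ Ik n k :=
    { fx.toRingHom with commutes' := fun _ => rfl }
  let gy : Rr n →ₐ[invar n k] PP n ⧸ Ik n k :=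
    { fy.toRingHom with commutes' := fun r => (invar_le_congSub hkn r.2).symm }
  let Ψ : Rr n ⊗[invar n k] Rr n →ₐ[invar n k] PP n ⧸ Ik n k :=
    Algebra.TensorProduct.productMap gx gy
  have hΨ : Ψ.toRingHom.comp (Phi n k).toRingHom = Ideal.Quotient.mk (Ik n k) := by
    apply MvPolynomial.ringHom_ext
    · intro r
      exact RingHom.congr_fun (Subsingleton.elim
        ((Ψ.toRingHom.comp (Phi n k).toRingHom).comp C) ((Ideal.Quotient.mk (Ik n k)).comp C)) r
    · rintro (i | i)
      · change Ψ (Phi n k (X (Sum.inl i))) = _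
        rw [← rename_X Sum.inl i, Phi_inl]
        refine (Algebra.TensorProduct.productMap_apply_tmul gx gy _ _).trans ?_
        rw [map_one, mul_one]
        rfl
      · change Ψ (Phi n k (X (Sum.inr i))) = _
        rw [← rename_X Sum.inr i, Phi_inr]
        refine (Algebra.TensorProduct.productMap_apply_tmul gx gy _ _).trans ?_
        rw [map_one, one_mul]
        rfl
  intro p hp
  rw [← Ideal.Quotient.eq_zero_iff_mem, ← hΨ, RingHom.comp_apply, RingHom.mem_ker.1 hp, map_zero]

lemma ker_Phi {n k : ℕ} (hkn : k ≤ n) : RingHom.ker (Phi n k).toRingHom = Ik n k :=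
  le_antisymm (ker_le_Ik hkn) (Ik_le_ker n k)

lemma nonempty_quot_equiv {n k : ℕ} (hkn : k ≤ n) :
    Nonempty ((PP n ⧸ Ik n k) ≃ₗ[PP n] ((Rr n) ⊗[invar n k] (Rr n))) := by
  let L : PP n →ₗ[PP n] ((Rr n) ⊗[invar n k] (Rr n)) :=
    { toFun := Phi n k
      map_add' := map_add _
      map_smul' := fun a b => map_mul (Phi n k) a b }
  have hL : Ik n k = LinearMap.ker L := by
    rw [← ker_Phi hkn]
    rfl
  exact ⟨(Submodule.quotEquivOfEq _ _ hL).trans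
    (L.quotKerEquivOfSurjective (Phi_surjective n k))⟩

end

open TensorProduct in
/-- `Φ_k` is surjective with kernel exactly `I_k`; in particular
`P/I_n ≅ R ⊗_{R^{S_n}} R` and `P/I_{n−1} ≅ R ⊗_{R^{S_{n−1}}} R` as `P`-modules
(equivalently, as `(R,R)`-bimodules). -/
theorem Phi_surjective_ker (n : ℕ) (hn : 1 ≤ n) (k : ℕ) (hk : 1 ≤ k) (hkn : k ≤ n) :
    Function.Surjective (Phi n k) ∧
    RingHom.ker (Phi n k).toRingHom = Ik n k ∧
    Nonempty ((PP n ⧸ Ik n n) ≃ₗ[PP n] ((Rr n) ⊗[invar n n] (Rr n))) ∧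
    Nonempty ((PP n ⧸ Ik n (n - 1)) ≃ₗ[PP n] ((Rr n) ⊗[invar n (n - 1)] (Rr n))) := by
  refine ⟨Phi_surjective n k, ker_Phi hkn, nonempty_quot_equiv le_rfl,
    nonempty_quot_equiv (Nat.sub_le n 1)⟩

end
end
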